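/- arXiv:1805.03566 — 2 statements merged into one kernel-verified Lean document; each statement's English description precedes it below -/
import Mathlib

section
/- Let ν be a lattice path. The right-flushing map R is well defined (for every ν-path μ there are always enough available x-coordinates to place all points, and R(μ) is a ν-tree), the left-flushing map L is well defined (for every ν-tree T, L(T) is the set of lattice points of a ν-path), and R and L are mutually inverse bijections between the set of ν-paths and the set of ν-trees. -/
open scoped Classical

/-! Lattice paths: `true` = north step, `false` = east step. -/

def eastSteps (ν : List Bool) : ℕ := ν.count false
def northSteps (ν : List Bool) : ℕ := ν.count true

/-- Height at which the path first reaches abscissa `x`. -/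
def heightAt : List Bool → ℕ → ℕ
  | _, 0 => 0
  | [], _ + 1 => 0
  | true :: rest, x + 1 => heightAt rest (x + 1) + 1
  | false :: rest, x + 1 => heightAt rest x

/-- Lattice point of a path after `i` steps. -/
def pointAt (μ : List Bool) (i : ℕ) : ℕ × ℕ :=
  ((μ.take i).count false, (μ.take i).count true)

/-- The set `A_ν` of lattice points weakly above `ν`. -/
def APts (ν : List Bool) : Set (ℕ × ℕ) :=
  {p | p.1 ≤ eastSteps ν ∧ heightAt ν p.1 ≤ p.2 ∧ p.2 ≤ northSteps ν}

def Incompatible (ν : List Bool) (p q : ℕ × ℕ) : Prop :=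
  (p.1 < q.1 ∧ p.2 < q.2 ∧ (q.1, p.2) ∈ APts ν) ∨
    (q.1 < p.1 ∧ q.2 < p.2 ∧ (p.1, q.2) ∈ APts ν)

def Compatible (ν : List Bool) (p q : ℕ × ℕ) : Prop := ¬ Incompatible ν p q

def IsNuTree (ν : List Bool) (T : Set (ℕ × ℕ)) : Prop :=
  T ⊆ APts ν ∧ T.Pairwise (Compatible ν) ∧
    ∀ T', T' ⊆ APts ν → T'.Pairwise (Compatible ν) → T ⊆ T' → T' = T

def IsRightRotationAt (T T' : Set (ℕ × ℕ)) (q q' : ℕ × ℕ) : Prop :=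
  ∃ x y x'' y', q = (x, y) ∧ q' = (x'', y') ∧ x < x'' ∧ y < y' ∧
    (x, y) ∈ T ∧ (x, y') ∈ T ∧ (x'', y) ∈ T ∧
    (∀ b, y < b → b < y' → (x, b) ∉ T) ∧
    (∀ a, x < a → a < x'' → (a, y) ∉ T) ∧
    (∀ a, x < a → a < x'' → (a, y') ∉ T) ∧
    (∀ b, y < b → b < y' → (x'', b) ∉ T) ∧
    T' = (T \ {(x, y)}) ∪ {(x'', y')}

def IsRightRotation (T T' : Set (ℕ × ℕ)) : Prop :=
  ∃ q q', IsRightRotationAt T T' q q'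

/-- Order relation of the rotation poset of ν-trees. -/
def TreeLE (ν : List Bool) : Set (ℕ × ℕ) → Set (ℕ × ℕ) → Prop :=
  Relation.ReflTransGen fun A B => IsNuTree ν A ∧ IsNuTree ν B ∧ IsRightRotation A B

def IsNuPath (ν μ : List Bool) : Prop :=
  eastSteps μ = eastSteps ν ∧ northSteps μ = northSteps ν ∧
    ∀ i ≤ μ.length, pointAt μ i ∈ APts ν

noncomputable def horiz (ν : List Bool) (p : ℕ × ℕ) : ℕ :=
  sSup {k | (p.1 + k, p.2) ∈ APts ν}

/-- Covering relation of the ν-Tamari lattice. -/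
def TamariCover (ν μ μ' : List Bool) : Prop :=
  IsNuPath ν μ ∧ IsNuPath ν μ' ∧
    ∃ i j, 0 < i ∧ i < j ∧ j ≤ μ.length ∧
      μ.getD (i - 1) true = false ∧ μ.getD i false = true ∧
      horiz ν (pointAt μ j) = horiz ν (pointAt μ i) ∧
      (∀ k, i < k → k < j → horiz ν (pointAt μ k) ≠ horiz ν (pointAt μ i)) ∧
      μ' = μ.take (i - 1) ++ (μ.drop i).take (j - i) ++ [false] ++ μ.drop j

def TamariLE (ν : List Bool) : List Bool → List Bool → Prop :=
  Relation.ReflTransGen (TamariCover ν)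

/-! Flushing maps -/

def rowAvail (ν : List Bool) (y : ℕ) : List ℕ :=
  ((List.range (eastSteps ν + 1)).filter fun x => decide (heightAt ν x ≤ y)).reverse

def pointsAtHeight (μ : List Bool) (y : ℕ) : ℕ :=
  ((List.range (μ.length + 1)).filter fun i => decide ((μ.take i).count true = y)).length

def rflushAux (ν : List Bool) : List ℕ → ℕ → List ℕ → List (ℕ × ℕ)
  | [], _, _ => []
  | c :: rest, y, forbidden =>
    let placed := ((rowAvail ν y).filter fun x => decide (x ∉ forbidden)).take c
    placed.map (fun x => (x, y)) ++ rflushAux ν rest (y + 1) (forbidden ++ placed.dropLast)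

/-- Right-flushing map `R`. -/
def Rflush (ν μ : List Bool) : Set (ℕ × ℕ) :=
  {p | p ∈ rflushAux ν ((List.range (northSteps ν + 1)).map (pointsAtHeight μ)) 0 []}

def lflushAux (m : ℕ) : List ℕ → ℕ → List ℕ → List (ℕ × ℕ)
  | [], _, _ => []
  | c :: rest, y, forbidden =>
    let placed := ((List.range (m + 1)).filter fun x => decide (x ∉ forbidden)).take c
    placed.map (fun x => (x, y)) ++ lflushAux m rest (y + 1) (forbidden ++ placed.dropLast)

noncomputable def rowCount (T : Set (ℕ × ℕ)) (y : ℕ) : ℕ := {x | (x, y) ∈ T}.ncard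

/-- Left-flushing map `L`. -/
noncomputable def Lflush (ν : List Bool) (T : Set (ℕ × ℕ)) : Set (ℕ × ℕ) :=
  {p | p ∈ lflushAux (eastSteps ν) ((List.range (northSteps ν + 1)).map (rowCount T)) 0 []}

def pathPointSet (μ : List Bool) : Set (ℕ × ℕ) := {p | ∃ i ≤ μ.length, pointAt μ i = p}

/-! Bracket vectors (0-indexed positions `0,…,ℓ`). -/

noncomputable def fpos (ν : List Bool) (k : ℕ) : ℕ :=
  sSup {i | i ≤ ν.length ∧ (ν.take i).count true = k}

def bmin (ν : List Bool) : List ℕ :=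
  (List.range (ν.length + 1)).map fun i => (ν.take i).count true

def IsBracketVector (ν : List Bool) (b : List ℕ) : Prop :=
  b.length = ν.length + 1 ∧
    (∀ k ≤ northSteps ν, b.getD (fpos ν k) 0 = k) ∧
    (∀ i < b.length, (bmin ν).getD i 0 ≤ b.getD i 0 ∧ b.getD i 0 ≤ northSteps ν) ∧
    ∀ i j k, i < j → j < k → k < b.length →
      ¬(b.getD i 0 = b.getD k 0 ∧ b.getD i 0 < b.getD j 0)

noncomputable def leftChild (T : Set (ℕ × ℕ)) (p : ℕ × ℕ) : Option (ℕ × ℕ) :=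
  if ∃ b, (p.1, b) ∈ T ∧ b < p.2 then some (p.1, sSup {b | (p.1, b) ∈ T ∧ b < p.2})
  else none

noncomputable def rightChild (T : Set (ℕ × ℕ)) (p : ℕ × ℕ) : Option (ℕ × ℕ) :=
  if ∃ a, (a, p.2) ∈ T ∧ p.1 < a then
    if ∃ b, (sInf {a | (a, p.2) ∈ T ∧ p.1 < a}, b) ∈ T ∧ p.2 < b then none
    else some (sInf {a | (a, p.2) ∈ T ∧ p.1 < a}, p.2)
  else none

noncomputable def inorderAux (T : Set (ℕ × ℕ)) : ℕ → ℕ × ℕ → List (ℕ × ℕ)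
  | 0, _ => []
  | fuel + 1, p =>
    (match leftChild T p with
      | none => []
      | some l => inorderAux T fuel l) ++ p ::
      (match rightChild T p with
        | none => []
        | some r => inorderAux T fuel r)

/-- Bracket vector of a ν-tree: y-coordinates read in in-order from the root `(0,n)`. -/
noncomputable def bracketOfTree (ν : List Bool) (T : Set (ℕ × ℕ)) : List ℕ :=
  (inorderAux T T.ncard (0, northSteps ν)).map Prod.snd

noncomputable def bracketAssign (ν μ : List Bool) : List (ℕ × ℕ) :=
  ((List.range (northSteps ν + 1)).foldl
    (fun (st : List (ℕ × ℕ) × List ℕ) k =>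
      let picked := ((st.2.filter fun i => decide (i ≤ fpos ν k)).reverse).take
        (pointsAtHeight μ k)
      (st.1 ++ picked.map fun i => (i, k), st.2.filter fun i => decide (i ∉ picked)))
    ([], List.range (ν.length + 1))).1

/-- Bracket vector of a ν-path. -/
noncomputable def bracketOfPath (ν μ : List Bool) : List ℕ :=
  (List.range (ν.length + 1)).map fun i => ((bracketAssign ν μ).lookup i).getD 0

/-- Componentwise order on (equal length) integer vectors. -/
def listLE (b b' : List ℕ) : Prop :=
  b.length = b'.length ∧ ∀ i, b.getD i 0 ≤ b'.getD i 0

/-! Reversal -/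

def revPath (ν : List Bool) : List Bool := ν.reverse.map fun s => !s

def revTree (ν : List Bool) (T : Set (ℕ × ℕ)) : Set (ℕ × ℕ) :=
  (fun p : ℕ × ℕ => (northSteps ν - p.2, eastSteps ν - p.1)) '' T

/-! Pipe dreams and subword complexes -/

def dOf (ν : List Bool) (p : ℕ × ℕ) : ℕ := p.1 + (northSteps ν - p.2)

def labelPerm (ν : List Bool) (p : ℕ × ℕ) : Equiv.Perm ℕ :=
  Equiv.swap (dOf ν p + 1) (dOf ν p + 2)

/-- The points of `A_ν` in reading order: rows from bottom to top, each left to right. -/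
def readingList (ν : List Bool) : List (ℕ × ℕ) :=
  ((List.range (northSteps ν + 1)).map fun y =>
    ((List.range (eastSteps ν + 1)).filter fun x => decide (heightAt ν x ≤ y)).map
      fun x => (x, y)).flatten

/-- The minimal ν-tree. -/
def TminSet (ν : List Bool) : Set (ℕ × ℕ) :=
  {p | p ∈ APts ν ∧ (p.1 = 0 ∨ ∃ i < ν.length, ν.getD i true = false ∧ p = pointAt ν (i + 1))}

noncomputable def prodOver (ν : List Bool) (C : Set (ℕ × ℕ)) : Equiv.Perm ℕ :=
  (((readingList ν).filter fun p => decide (p ∈ C)).map (labelPerm ν)).prod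

/-- Coxeter length: number of inversions. -/
noncomputable def lenInv (π : Equiv.Perm ℕ) : ℕ :=
  {q : ℕ × ℕ | q.1 < q.2 ∧ π q.2 < π q.1}.ncard

noncomputable def piNu (ν : List Bool) : Equiv.Perm ℕ := prodOver ν (APts ν \ TminSet ν)

def Qword (ν : List Bool) : List (Equiv.Perm ℕ) := (readingList ν).map (labelPerm ν)

noncomputable def prodAt (Q : List (Equiv.Perm ℕ)) (P : Finset ℕ) : Equiv.Perm ℕ :=
  (((List.range Q.length).filter fun i => decide (i ∈ P)).map fun i => Q.getD i 1).prod

def IsFacet (Q : List (Equiv.Perm ℕ)) (π : Equiv.Perm ℕ) (I : Finset ℕ) : Prop :=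
  I ⊆ Finset.range Q.length ∧
    prodAt Q (Finset.range Q.length \ I) = π ∧
    (Finset.range Q.length \ I).card = lenInv π

def IncFlip (Q : List (Equiv.Perm ℕ)) (π : Equiv.Perm ℕ) (I J : Finset ℕ) : Prop :=
  IsFacet Q π I ∧ IsFacet Q π J ∧ ∃ i ∈ I, ∃ j ∈ J, i < j ∧ I.erase i = J.erase j

def FlipLE (Q : List (Equiv.Perm ℕ)) (π : Equiv.Perm ℕ) : Finset ℕ → Finset ℕ → Prop :=
  Relation.ReflTransGen (IncFlip Q π)

/-- The maximal ν-tree. -/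
def TmaxSet (ν : List Bool) : Set (ℕ × ℕ) :=
  {p | (p.1 ≤ eastSteps ν ∧ p.2 = northSteps ν) ∨ ∃ i < ν.length, ν.getD i false = true ∧ p = pointAt ν i}

/-!
Call an abscissa of row `y` forbidden for a set `T` of points if placing a point there would make it
incompatible with a point of `T` in a lower row. A `ν`-tree is the same thing as a subset of `A_ν`
whose rows are upper segments of the non-forbidden abscissas (it is right-flushed) and whose row
sizes are the row sizes of a `ν`-path. In a right-flushed set, every point which is not leftmost in
its row forbids exactly one new abscissa for the rows above, so counting forbidden abscissas links
the row sizes to the shape of `A_ν`. Since a right-flushed set is determined by its row sizes, and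
`R` and `L` both preserve row sizes, the two maps are inverse to each other.
-/

section Flushing

variable {α : Type*} [DecidableEq α]

/-- The common recursion of `rflushAux` and `lflushAux`: row `y` receives the first elements of
the list `A y` that are not forbidden. -/
def flushAux (A : ℕ → List α) : List ℕ → ℕ → List α → List (α × ℕ)
  | [], _, _ => []
  | c :: rest, y, forbidden =>
    let placed := ((A y).filter fun x => decide (x ∉ forbidden)).take c
    placed.map (fun x => (x, y)) ++ flushAux A rest (y + 1) (forbidden ++ placed.dropLast)

/-- The abscissas forbidden in row `y` when rows `0, 1, …` receive `c 0, c 1, …` points. -/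
def flushForbidden (A : ℕ → List α) (c : ℕ → ℕ) : ℕ → List α
  | 0 => []
  | y + 1 => flushForbidden A c y ++
      (((A y).filter fun x => decide (x ∉ flushForbidden A c y)).take (c y)).dropLast

/-- The abscissas of the points placed in row `y` when rows `0, 1, …` receive `c 0, c 1, …`
points. -/
def flushPlaced (A : ℕ → List α) (c : ℕ → ℕ) (y : ℕ) : List α :=
  ((A y).filter fun x => decide (x ∉ flushForbidden A c y)).take (c y)

lemma flushForbidden_succ (A : ℕ → List α) (c : ℕ → ℕ) (y : ℕ) :
    flushForbidden A c (y + 1) = flushForbidden A c y ++ (flushPlaced A c y).dropLast := rfl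

lemma mem_flushAux (A : ℕ → List α) (c : ℕ → ℕ) (k y : ℕ) (p : α × ℕ) :
    p ∈ flushAux A ((List.range' y k).map c) y (flushForbidden A c y) ↔
      y ≤ p.2 ∧ p.2 < y + k ∧ p.1 ∈ flushPlaced A c p.2 := by
  induction k generalizing y with
  | zero => exact iff_of_false List.not_mem_nil (by omega)
  | succ k ih =>
    have unfold_first_row : flushAux A ((List.range' y (k + 1)).map c) y (flushForbidden A c y) =
        (flushPlaced A c y).map (fun x => (x, y)) ++
          flushAux A ((List.range' (y + 1) k).map c) (y + 1) (flushForbidden A c (y + 1)) := rfl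
    obtain ⟨x, z⟩ := p
    rw [unfold_first_row, List.mem_append, ih]
    simp only [List.mem_map, Prod.mk.injEq]
    constructor
    · rintro (⟨x, hx, rfl, rfl⟩ | ⟨hy, hz, hx⟩)
      · exact ⟨le_rfl, by omega, hx⟩
      · exact ⟨by omega, by omega, hx⟩
    · rintro ⟨hy, hz, hx⟩
      obtain rfl | hlt := hy.eq_or_lt
      · exact Or.inl ⟨x, hx, rfl, rfl⟩
      · exact Or.inr ⟨hlt, by omega, hx⟩

lemma rflushAux_eq_flushAux (ν : List Bool) (cs : List ℕ) (y : ℕ) (F : List ℕ) :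
    rflushAux ν cs y F = flushAux (rowAvail ν) cs y F := by
  induction cs generalizing y F with
  | nil => rfl
  | cons c cs ih => simp only [rflushAux, flushAux, ih]

lemma lflushAux_eq_flushAux (m : ℕ) (cs : List ℕ) (y : ℕ) (F : List ℕ) :
    lflushAux m cs y F = flushAux (fun _ => List.range (m + 1)) cs y F := by
  induction cs generalizing y F with
  | nil => rfl
  | cons c cs ih => simp only [lflushAux, flushAux, ih]

lemma mem_Rflush {ν μ : List Bool} {x y : ℕ} :
    (x, y) ∈ Rflush ν μ ↔
      y ≤ northSteps ν ∧ x ∈ flushPlaced (rowAvail ν) (pointsAtHeight μ) y := by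
  have h := mem_flushAux (rowAvail ν) (pointsAtHeight μ) (northSteps ν + 1) 0 (x, y)
  rw [← rflushAux_eq_flushAux, ← List.range_eq_range'] at h
  simpa [Rflush, flushForbidden, Nat.lt_succ_iff] using h

lemma mem_Lflush {ν : List Bool} {T : Set (ℕ × ℕ)} {x y : ℕ} :
    (x, y) ∈ Lflush ν T ↔ y ≤ northSteps ν ∧
      x ∈ flushPlaced (fun _ => List.range (eastSteps ν + 1)) (rowCount T) y := by
  have h := mem_flushAux (fun _ => List.range (eastSteps ν + 1)) (rowCount T)
    (northSteps ν + 1) 0 (x, y)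
  rw [← lflushAux_eq_flushAux, ← List.range_eq_range'] at h
  simpa [Lflush, flushForbidden, Nat.lt_succ_iff] using h

lemma nodup_flushPlaced {A : ℕ → List α} (hA : ∀ y, (A y).Nodup) (c : ℕ → ℕ) (y : ℕ) :
    (flushPlaced A c y).Nodup :=
  ((hA y).filter _).sublist (List.take_sublist _ _)

lemma mem_and_notMem_of_mem_flushPlaced {A : ℕ → List α} {c : ℕ → ℕ} {x : α} {y : ℕ}
    (h : x ∈ flushPlaced A c y) : x ∈ A y ∧ x ∉ flushForbidden A c y := by
  simpa using List.mem_of_mem_take h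

end Flushing

section SortedFlushing

variable {α : Type*}

lemma mem_take_of_pairwise_gt [Preorder α] {L : List α} (hL : L.Pairwise (· > ·)) {k : ℕ} {x z : α}
    (hx : x ∈ L.take k) (hz : z ∈ L) (hxz : x < z) : z ∈ L.take k := by
  rw [← List.take_append_drop k L] at hL hz
  refine (List.mem_append.1 hz).resolve_right fun hz' => ?_
  exact lt_asymm hxz ((List.pairwise_append.1 hL).2.2 x hx z hz')

lemma mem_dropLast_iff_of_pairwise_gt [Preorder α] {L : List α} (hL : L.Pairwise (· > ·)) {x : α} :
    x ∈ L.dropLast ↔ x ∈ L ∧ ∃ l ∈ L, l < x := by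
  obtain rfl | ⟨L, b, rfl⟩ := List.eq_nil_or_concat' L
  · simp
  have hb : ∀ a ∈ L, b < a := fun a ha =>
    (List.pairwise_append.1 hL).2.2 a ha b (List.mem_singleton_self b)
  rw [List.dropLast_concat]
  simp only [List.mem_append, List.mem_singleton]
  constructor
  · exact fun hx => ⟨Or.inl hx, b, Or.inr rfl, hb x hx⟩
  · rintro ⟨hx | rfl, l, hl | rfl, hlx⟩
    · exact hx
    · exact hx
    · exact absurd hlx (lt_asymm (hb l hl))
    · exact absurd hlx (lt_irrefl _)

variable [LinearOrder α] {A : ℕ → List α} {c : ℕ → ℕ}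

lemma mem_flushPlaced_of_lt (hA : ∀ y, (A y).Pairwise (· > ·)) {l x : α} {y : ℕ}
    (hl : l ∈ flushPlaced A c y) (hlx : l < x) (hx : x ∈ A y) (hxF : x ∉ flushForbidden A c y) :
    x ∈ flushPlaced A c y :=
  mem_take_of_pairwise_gt ((hA y).filter _) hl (by simp [hx, hxF]) hlx

lemma mem_flushForbidden_succ (hA : ∀ y, (A y).Pairwise (· > ·)) {x : α} {y : ℕ} :
    x ∈ flushForbidden A c (y + 1) ↔
      x ∈ flushForbidden A c y ∨ x ∈ A y ∧ ∃ l ∈ flushPlaced A c y, l < x := by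
  have hplaced : (flushPlaced A c y).Pairwise (· > ·) :=
    ((hA y).filter _).sublist (List.take_sublist _ _)
  rw [flushForbidden_succ, List.mem_append, mem_dropLast_iff_of_pairwise_gt hplaced]
  refine ⟨Or.imp_right fun ⟨hx, h⟩ => ⟨(mem_and_notMem_of_mem_flushPlaced hx).1, h⟩, ?_⟩
  rintro (hx | ⟨hx, l, hl, hlx⟩)
  · exact Or.inl hx
  · exact or_iff_not_imp_left.2 fun hxF => ⟨mem_flushPlaced_of_lt hA hl hlx hx hxF, l, hl, hlx⟩

lemma mem_flushForbidden (hA : ∀ y, (A y).Pairwise (· > ·)) {x : α} {y : ℕ} :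
    x ∈ flushForbidden A c y ↔ ∃ j < y, x ∈ A j ∧ ∃ l ∈ flushPlaced A c j, l < x := by
  induction y with
  | zero => simp [flushForbidden]
  | succ y ih => rw [mem_flushForbidden_succ hA, ih, Nat.exists_lt_succ_right]

end SortedFlushing

/-! ### Row sizes and lattice paths -/

section RowSizes

variable {c d : ℕ → ℕ}

/-- The abscissa at which a lattice path with `c 0, c 1, …` points in rows `0, 1, …` enters row
`y`. An empty row counts as a row of size one, because of the truncated subtraction. -/
def entryAbscissa (c : ℕ → ℕ) (y : ℕ) : ℕ := ∑ j ∈ Finset.range y, (c j - 1)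

lemma entryAbscissa_succ (c : ℕ → ℕ) (y : ℕ) :
    entryAbscissa c (y + 1) = entryAbscissa c y + (c y - 1) :=
  Finset.sum_range_succ _ _

lemma entryAbscissa_add_self {y : ℕ} (hy : 0 < c y) :
    entryAbscissa c y + c y = entryAbscissa c (y + 1) + 1 := by
  rw [entryAbscissa_succ]; omega

lemma monotone_entryAbscissa (c : ℕ → ℕ) : Monotone (entryAbscissa c) :=
  monotone_nat_of_le_succ fun y => (entryAbscissa_succ c y).symm ▸ Nat.le_add_right _ _

lemma entryAbscissa_congr {y : ℕ} (h : ∀ j < y, c j = d j) :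
    entryAbscissa c y = entryAbscissa d y :=
  Finset.sum_congr rfl fun j hj => by rw [h j (Finset.mem_range.1 hj)]

/-- The points of the lattice path with `c 0, …, c n` points in rows `0, …, n`. -/
def staircase (n : ℕ) (c : ℕ → ℕ) : Set (ℕ × ℕ) :=
  {p | p.2 ≤ n ∧ p.1 ∈ Set.Ico (entryAbscissa c p.2) (entryAbscissa c p.2 + c p.2)}

lemma staircase_congr {n : ℕ} (h : ∀ y ≤ n, c y = d y) : staircase n c = staircase n d := by
  ext ⟨x, y⟩
  refine and_congr_right fun hy => ?_
  have hy : y ≤ n := hy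
  simp only [h y hy, entryAbscissa_congr fun j (hj : j < y) => h j (by omega)]

lemma rowCount_staircase {n y : ℕ} (c : ℕ → ℕ) (hy : y ≤ n) : rowCount (staircase n c) y = c y := by
  have row_eq : {x | (x, y) ∈ staircase n c} =
      Set.Ico (entryAbscissa c y) (entryAbscissa c y + c y) :=
    Set.ext fun _ => and_iff_right hy
  rw [rowCount, row_eq, Set.ncard_Ico_nat, Nat.add_sub_cancel_left]

end RowSizes

section Paths

variable (μ : List Bool)

lemma northSteps_append_singleton (b : Bool) :
    northSteps (μ ++ [b]) = northSteps μ + if b then 1 else 0 := by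
  cases b <;> simp [northSteps]

lemma pointsAtHeight_append_singleton (b : Bool) (y : ℕ) :
    pointsAtHeight (μ ++ [b]) y =
      pointsAtHeight μ y + if y = northSteps (μ ++ [b]) then 1 else 0 := by
  have agree : ∀ i ∈ List.range (μ.length + 1),
      decide (((μ ++ [b]).take i).count true = y) = decide ((μ.take i).count true = y) := by
    intro i hi
    rw [List.take_append_of_le_length (Nat.lt_succ_iff.1 (List.mem_range.1 hi))]
  rw [pointsAtHeight, List.length_append, List.length_singleton, List.range_succ,
    List.filter_append, List.length_append, List.filter_congr agree, pointsAtHeight]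
  congr 1
  have last : ((μ ++ [b]).take (μ.length + 1)).count true = northSteps (μ ++ [b]) := by
    rw [List.take_of_length_le (by simp), northSteps]
  split_ifs with h
  · simp [last, h]
  · simp [last, Ne.symm h]

lemma pointsAtHeight_append_replicate_false (k y : ℕ) :
    pointsAtHeight (μ ++ List.replicate k false) y =
      pointsAtHeight μ y + if y = northSteps μ then k else 0 := by
  induction k with
  | zero => simp
  | succ k ih =>
    have north : northSteps (μ ++ List.replicate (k + 1) false) = northSteps μ := by
      simp [northSteps, List.count_replicate]
    rw [List.replicate_succ', ← List.append_assoc] at north ⊢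
    rw [pointsAtHeight_append_singleton, ih, north]
    split_ifs <;> rfl

lemma pointsAtHeight_eq_zero {y : ℕ} (hy : northSteps μ < y) : pointsAtHeight μ y = 0 := by
  rw [pointsAtHeight, List.length_eq_zero_iff, List.filter_eq_nil_iff]
  intro i _ hi
  exact hy.not_ge (of_decide_eq_true hi ▸ (List.take_sublist i μ).count_le true)

lemma pointsAtHeight_pos {y : ℕ} (hy : y ≤ northSteps μ) : 0 < pointsAtHeight μ y := by
  induction μ using List.reverseRecOn with
  | nil => simp_all [northSteps, pointsAtHeight]
  | append_singleton μ b ih =>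
    rw [pointsAtHeight_append_singleton]
    split_ifs with h
    · omega
    · refine ih ?_
      rw [northSteps_append_singleton] at hy h
      split_ifs at hy h <;> omega

lemma entryAbscissa_pointsAtHeight_append_singleton (b : Bool) {y : ℕ}
    (hy : y ≤ northSteps (μ ++ [b])) :
    entryAbscissa (pointsAtHeight (μ ++ [b])) y = entryAbscissa (pointsAtHeight μ) y :=
  entryAbscissa_congr fun j hj => by
    rw [pointsAtHeight_append_singleton, if_neg (by omega), Nat.add_zero]

lemma entryAbscissa_pointsAtHeight_northSteps :
    entryAbscissa (pointsAtHeight μ) (northSteps μ + 1) = eastSteps μ := by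
  induction μ using List.reverseRecOn with
  | nil => rfl
  | append_singleton μ b ih =>
    have hpos := pointsAtHeight_pos μ le_rfl
    have hzero : pointsAtHeight μ (northSteps μ + 1) = 0 :=
      pointsAtHeight_eq_zero μ (Nat.lt_succ_self _)
    rw [entryAbscissa_succ, entryAbscissa_pointsAtHeight_append_singleton μ b le_rfl,
      pointsAtHeight_append_singleton, if_pos rfl, northSteps_append_singleton]
    cases b with
    | false =>
      have east : eastSteps (μ ++ [false]) = eastSteps μ + 1 := by simp [eastSteps]
      rw [entryAbscissa_succ] at ih
      simp only [Bool.false_eq_true, if_false, Nat.add_zero]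
      omega
    | true =>
      have east : eastSteps (μ ++ [true]) = eastSteps μ := by simp [eastSteps]
      simp only [if_true]
      omega

lemma pathPointSet_append_singleton (b : Bool) :
    pathPointSet (μ ++ [b]) =
      insert (eastSteps (μ ++ [b]), northSteps (μ ++ [b])) (pathPointSet μ) := by
  have agree : ∀ i ≤ μ.length, pointAt (μ ++ [b]) i = pointAt μ i := fun i hi => by
    rw [pointAt, List.take_append_of_le_length hi, pointAt]
  have last : pointAt (μ ++ [b]) (μ.length + 1) =
      (eastSteps (μ ++ [b]), northSteps (μ ++ [b])) := by
    rw [pointAt, List.take_of_length_le (by simp), eastSteps, northSteps]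
  ext p
  simp only [pathPointSet, Set.mem_ofPred_eq, List.length_append, List.length_singleton,
    Set.mem_insert_iff, Nat.le_succ_iff]
  constructor
  · rintro ⟨i, hi | rfl, rfl⟩
    · exact Or.inr ⟨i, hi, (agree i hi).symm⟩
    · exact Or.inl last
  · rintro (rfl | ⟨i, hi, rfl⟩)
    · exact ⟨_, Or.inr rfl, last⟩
    · exact ⟨i, Or.inl hi, agree i hi⟩

theorem pathPointSet_eq_staircase :
    pathPointSet μ = staircase (northSteps μ) (pointsAtHeight μ) := by
  induction μ using List.reverseRecOn with
  | nil =>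
    ext ⟨x, y⟩
    have row_zero : pointsAtHeight [] 0 = 1 := rfl
    constructor
    · rintro ⟨i, -, h⟩
      obtain ⟨rfl, rfl⟩ : 0 = x ∧ 0 = y := by simpa [pointAt] using h
      simp [staircase, row_zero, entryAbscissa]
    · rintro ⟨hy, hx⟩
      obtain rfl : y = 0 := Nat.le_zero.1 hy
      obtain rfl : x = 0 := by simpa [row_zero, entryAbscissa] using hx
      exact ⟨0, le_rfl, rfl⟩
  | append_singleton μ b ih =>
    have north := northSteps_append_singleton μ b
    have last_east := entryAbscissa_pointsAtHeight_northSteps (μ ++ [b])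
    have last_row := entryAbscissa_add_self (pointsAtHeight_pos (μ ++ [b]) le_rfl)
    have count := pointsAtHeight_append_singleton μ b
    rw [pathPointSet_append_singleton, ih]
    ext ⟨x, y⟩
    simp only [staircase, Set.mem_insert_iff, Set.mem_ofPred_eq, Set.mem_Ico, Prod.mk.injEq]
    by_cases hy : y ≤ northSteps (μ ++ [b])
    · have entry := entryAbscissa_pointsAtHeight_append_singleton μ b hy
      obtain rfl | hlt := hy.eq_or_lt
      · have above := pointsAtHeight_eq_zero μ (y := northSteps (μ ++ [b]))
        have count := count (northSteps (μ ++ [b]))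
        rw [if_pos rfl] at count
        omega
      · have count := count y
        rw [if_neg hlt.ne] at count
        have : y ≤ northSteps μ := by split_ifs at north <;> omega
        omega
    · have : ¬ y ≤ northSteps μ := by omega
      omega

lemma exists_northSteps_eq_and_pointsAtHeight_eq {n : ℕ} {c : ℕ → ℕ} (hc : ∀ y ≤ n, 0 < c y) :
    ∃ μ, northSteps μ = n ∧ ∀ y ≤ n, pointsAtHeight μ y = c y := by
  have exists_extension : ∀ μ k, 0 < k → pointsAtHeight μ (northSteps μ) = 1 → ∃ μ',
      northSteps μ' = northSteps μ ∧ pointsAtHeight μ' (northSteps μ) = k ∧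
        ∀ y < northSteps μ, pointsAtHeight μ' y = pointsAtHeight μ y := by
    intro μ k hk hμ
    have count := pointsAtHeight_append_replicate_false μ (k - 1)
    refine ⟨μ ++ List.replicate (k - 1) false, by simp [northSteps, List.count_replicate], ?_, ?_⟩
    · rw [count, if_pos rfl]; omega
    · intro y hy
      rw [count, if_neg hy.ne, Nat.add_zero]
  induction n with
  | zero =>
    obtain ⟨μ, north, last, -⟩ := exists_extension [] (c 0) (hc 0 le_rfl) rfl
    exact ⟨μ, north, fun y hy => Nat.le_zero.1 hy ▸ last⟩
  | succ n ih =>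
    obtain ⟨μ, rfl, count⟩ := ih fun y hy => hc y (Nat.le_succ_of_le hy)
    have north : northSteps (μ ++ [true]) = northSteps μ + 1 := northSteps_append_singleton μ true
    have last : pointsAtHeight (μ ++ [true]) (northSteps (μ ++ [true])) = 1 := by
      rw [pointsAtHeight_append_singleton, if_pos rfl, north,
        pointsAtHeight_eq_zero μ (Nat.lt_succ_self _)]
    obtain ⟨μ', north', last', below⟩ := exists_extension _ _ (hc _ le_rfl) last
    rw [north] at north' last' below
    refine ⟨μ', north', fun y hy => ?_⟩
    obtain rfl | hlt := hy.eq_or_lt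
    · exact last'
    · rw [below y hlt, pointsAtHeight_append_singleton, if_neg (by omega), Nat.add_zero]
      exact count y (Nat.lt_succ_iff.1 hlt)

end Paths

/-! ### The shape of `A_ν` -/

section Shape

variable {ν : List Bool}

lemma monotone_heightAt (ν : List Bool) : Monotone (heightAt ν) := by
  refine monotone_nat_of_le_succ fun x => ?_
  induction ν generalizing x with
  | nil => cases x <;> simp [heightAt]
  | cons b ν ih =>
    cases b <;> rcases x with _ | x
    · simp [heightAt]
    · simpa only [heightAt] using ih x
    · simp [heightAt]
    · simpa only [heightAt, Nat.add_le_add_iff_right] using ih (x + 1)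

lemma heightAt_le_northSteps (ν : List Bool) (x : ℕ) : heightAt ν x ≤ northSteps ν := by
  induction ν generalizing x with
  | nil => cases x <;> simp [heightAt]
  | cons b ν ih =>
    cases b <;> rcases x with _ | x
    · simp [heightAt]
    · simpa [heightAt, northSteps] using ih x
    · simp [heightAt]
    · simpa [heightAt, northSteps] using ih (x + 1)

lemma mem_APts {x y : ℕ} :
    (x, y) ∈ APts ν ↔ x ≤ eastSteps ν ∧ heightAt ν x ≤ y ∧ y ≤ northSteps ν := Iff.rfl

lemma mem_APts_of_le_left {x x' y : ℕ} (h : (x, y) ∈ APts ν) (hx : x' ≤ x) : (x', y) ∈ APts ν :=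
  ⟨hx.trans h.1, (monotone_heightAt ν hx).trans h.2.1, h.2.2⟩

lemma mem_APts_of_le_right {x y y' : ℕ} (h : (x, y) ∈ APts ν) (hy : y ≤ y')
    (hy' : y' ≤ northSteps ν) : (x, y') ∈ APts ν :=
  ⟨h.1, h.2.1.trans hy, hy'⟩

lemma zero_mem_APts {y : ℕ} (hy : y ≤ northSteps ν) : (0, y) ∈ APts ν :=
  ⟨Nat.zero_le _, by simp [heightAt], hy⟩

lemma top_mem_APts {x : ℕ} (hx : x ≤ eastSteps ν) : (x, northSteps ν) ∈ APts ν :=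
  ⟨hx, heightAt_le_northSteps ν x, le_rfl⟩

lemma finite_row {S : Set (ℕ × ℕ)} (hS : S ⊆ APts ν) (y : ℕ) : {x | (x, y) ∈ S}.Finite :=
  (Set.finite_Iic (eastSteps ν)).subset fun _ hx => (hS hx).1

lemma mem_rowAvail {x y : ℕ} (hy : y ≤ northSteps ν) : x ∈ rowAvail ν y ↔ (x, y) ∈ APts ν := by
  simp [rowAvail, mem_APts, hy]

lemma pairwise_gt_rowAvail (ν : List Bool) (y : ℕ) : (rowAvail ν y).Pairwise (· > ·) :=
  List.pairwise_reverse.2 (List.pairwise_lt_range.filter _)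

end Shape

section Counting

lemma ncard_setOf_mem_exists_lt {α : Type*} [LinearOrder α] {S : Set α} (hS : S.Finite) :
    {x ∈ S | ∃ l ∈ S, l < x}.ncard = S.ncard - 1 := by
  obtain rfl | hne := S.eq_empty_or_nonempty
  · simp
  obtain ⟨a, ha, hmin⟩ := Set.exists_min_image S id hS hne
  have eq_sdiff : {x ∈ S | ∃ l ∈ S, l < x} = S \ {a} := by
    ext x
    constructor
    · rintro ⟨hx, l, hl, hlx⟩
      exact ⟨hx, fun hxa => (hmin l hl).not_gt (hlx.trans_eq hxa)⟩
    · rintro ⟨hx, hxa⟩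
      exact ⟨hx, a, ha, (hmin x hx).lt_of_ne' hxa⟩
  rw [eq_sdiff, Set.ncard_sdiff_singleton_of_mem ha]

lemma eq_Iio_ncard_of_isLowerSet {S : Set ℕ} (hS : IsLowerSet S) (hfin : S.Finite) :
    S = Set.Iio S.ncard := by
  obtain rfl | ⟨a, rfl⟩ := hS.eq_univ_or_Iio
  · exact absurd hfin Set.infinite_univ
  · rw [Set.ncard_Iio_nat]

lemma mem_APts_iff_lt_rowCount {ν : List Bool} {x y : ℕ} :
    (x, y) ∈ APts ν ↔ x < rowCount (APts ν) y := by
  have row_eq := eq_Iio_ncard_of_isLowerSet (S := {x | (x, y) ∈ APts ν})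
    (fun _ _ hle h => mem_APts_of_le_left h hle) (finite_row subset_rfl y)
  exact Set.ext_iff.1 row_eq x

lemma subset_or_subset_of_mem_of_lt {α : Type*} [LinearOrder α] {S S' U : Set α}
    (hSU : S ⊆ U) (hS'U : S' ⊆ U) (hS : ∀ l ∈ S, ∀ x ∈ U, l < x → x ∈ S)
    (hS' : ∀ l ∈ S', ∀ x ∈ U, l < x → x ∈ S') : S ⊆ S' ∨ S' ⊆ S := by
  by_contra! h
  obtain ⟨a, haS, haS'⟩ := Set.not_subset.1 h.1
  obtain ⟨b, hbS', hbS⟩ := Set.not_subset.1 h.2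
  rcases lt_trichotomy a b with hab | rfl | hba
  · exact hbS (hS a haS b (hS'U hbS') hab)
  · exact hbS haS
  · exact haS' (hS' b hbS' a (hSU haS) hba)

end Counting

/-! ### Right-flushed sets -/

section RightFlushed

variable {ν : List Bool} {T T' : Set (ℕ × ℕ)}

/-- The abscissas at which a point in row `y` would be `ν`-incompatible with a point of `T` in a
lower row. For right-flushed `T` they are the points placed in the lower rows, leftmost points
excepted. -/
def forbiddenSet (ν : List Bool) (T : Set (ℕ × ℕ)) (y : ℕ) : Set ℕ :=
  {x | ∃ j < y, (x, j) ∈ APts ν ∧ ∃ l, (l, j) ∈ T ∧ l < x}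

/-- Each row of `T` is an upper segment of the non-forbidden abscissas of that row of `A_ν`. -/
structure IsRightFlushed (ν : List Bool) (T : Set (ℕ × ℕ)) : Prop where
  subset : T ⊆ APts ν
  notMem_forbiddenSet {x y : ℕ} : (x, y) ∈ T → x ∉ forbiddenSet ν T y
  mem_of_lt {l x y : ℕ} : (l, y) ∈ T → l < x → (x, y) ∈ APts ν → x ∉ forbiddenSet ν T y →
    (x, y) ∈ T

lemma forbiddenSet_succ (ν : List Bool) (T : Set (ℕ × ℕ)) (y : ℕ) :
    forbiddenSet ν T (y + 1) =
      forbiddenSet ν T y ∪ {x | (x, y) ∈ APts ν ∧ ∃ l, (l, y) ∈ T ∧ l < x} :=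
  Set.ext fun _ => Nat.exists_lt_succ_right

lemma forbiddenSet_mono (h : T ⊆ T') (y : ℕ) : forbiddenSet ν T y ⊆ forbiddenSet ν T' y :=
  fun _ ⟨j, hj, hx, l, hl, hlx⟩ => ⟨j, hj, hx, l, h hl, hlx⟩

lemma forbiddenSet_mono_right {y y' : ℕ} (h : y ≤ y') : forbiddenSet ν T y ⊆ forbiddenSet ν T y' :=
  fun _ ⟨j, hj, hx⟩ => ⟨j, hj.trans_le h, hx⟩

lemma forbiddenSet_congr {y : ℕ} (h : ∀ j < y, {x | (x, j) ∈ T} = {x | (x, j) ∈ T'}) :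
    forbiddenSet ν T y = forbiddenSet ν T' y := by
  ext x
  refine exists_congr fun j => and_congr_right fun hj => and_congr_right fun _ => ?_
  exact exists_congr fun l => and_congr_left fun _ => Set.ext_iff.1 (h j hj) l

lemma forbiddenSet_subset_Ioc (y : ℕ) : forbiddenSet ν T y ⊆ Set.Ioc 0 (eastSteps ν) :=
  fun _ ⟨_, _, hx, _, _, hlx⟩ => ⟨Nat.zero_lt_of_lt hlx, hx.1⟩

lemma finite_forbiddenSet (y : ℕ) : (forbiddenSet ν T y).Finite :=
  (Set.finite_Ioc 0 _).subset (forbiddenSet_subset_Ioc y)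

namespace IsRightFlushed

lemma forbiddenSet_succ (hT : IsRightFlushed ν T) (y : ℕ) :
    forbiddenSet ν T (y + 1) =
      forbiddenSet ν T y ∪ {x ∈ {x | (x, y) ∈ T} | ∃ l ∈ {x | (x, y) ∈ T}, l < x} := by
  rw [_root_.forbiddenSet_succ]
  ext x
  constructor
  · rintro (hx | ⟨hxA, l, hl, hlx⟩)
    · exact Or.inl hx
    · exact or_iff_not_imp_left.2 fun hxF => ⟨hT.mem_of_lt hl hlx hxA hxF, l, hl, hlx⟩
  · exact Or.imp_right fun ⟨hx, h⟩ => ⟨hT.subset hx, h⟩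

lemma ncard_forbiddenSet (hT : IsRightFlushed ν T) (y : ℕ) :
    (forbiddenSet ν T y).ncard = entryAbscissa (rowCount T) y := by
  induction y with
  | zero => simp [forbiddenSet, entryAbscissa]
  | succ y ih =>
    have hfin := finite_row hT.subset y
    have hdisj : Disjoint (forbiddenSet ν T y)
        {x ∈ {x | (x, y) ∈ T} | ∃ l ∈ {x | (x, y) ∈ T}, l < x} :=
      Set.disjoint_left.2 fun x hxF hx => hT.notMem_forbiddenSet hx.1 hxF
    rw [hT.forbiddenSet_succ, Set.ncard_union_eq hdisj (finite_forbiddenSet y) (hfin.sep _), ih,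
      ncard_setOf_mem_exists_lt hfin, entryAbscissa_succ, rowCount]

lemma exists_mem_of_mem_forbiddenSet (hT : IsRightFlushed ν T) {x y k : ℕ} (hyk : y ≤ k)
    (hx : x ∉ forbiddenSet ν T y) (hxk : x ∈ forbiddenSet ν T k) :
    ∃ j ≥ y, (x, j) ∈ T ∧ ∃ l, (l, j) ∈ T ∧ l < x := by
  induction k, hyk using Nat.le_induction with
  | base => exact absurd hxk hx
  | succ k hyk ih =>
    rw [hT.forbiddenSet_succ] at hxk
    exact hxk.elim ih fun h => ⟨k, hyk, h⟩

theorem eq_of_rowCount_eq (hT : IsRightFlushed ν T) (hT' : IsRightFlushed ν T')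
    (h : ∀ y ≤ northSteps ν, rowCount T y = rowCount T' y) : T = T' := by
  suffices rows : ∀ y, {x | (x, y) ∈ T} = {x | (x, y) ∈ T'} from
    Set.ext fun ⟨x, y⟩ => Set.ext_iff.1 (rows y) x
  intro y
  induction y using Nat.strong_induction_on with
  | h y ih =>
    have hF : forbiddenSet ν T y = forbiddenSet ν T' y := forbiddenSet_congr ih
    obtain hy | hy := le_or_gt y (northSteps ν)
    · rcases subset_or_subset_of_mem_of_lt (U := {x | (x, y) ∈ APts ν ∧ x ∉ forbiddenSet ν T y})
        (fun x hx => ⟨hT.subset hx, hT.notMem_forbiddenSet hx⟩)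
        (fun x hx => ⟨hT'.subset hx, hF ▸ hT'.notMem_forbiddenSet hx⟩)
        (fun l hl x hx hlx => hT.mem_of_lt hl hlx hx.1 hx.2)
        (fun l hl x hx hlx => hT'.mem_of_lt hl hlx hx.1 (hF ▸ hx.2)) with hsub | hsub
      · exact Set.eq_of_subset_of_ncard_le hsub (h y hy).ge (finite_row hT'.subset y)
      · exact (Set.eq_of_subset_of_ncard_le hsub (h y hy).le (finite_row hT.subset y)).symm
    · have row_empty : ∀ S ⊆ APts ν, {x | (x, y) ∈ S} = ∅ := fun S hS =>
        Set.eq_empty_of_forall_notMem fun x hx => hy.not_ge (hS hx).2.2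
      rw [row_empty T hT.subset, row_empty T' hT'.subset]

end IsRightFlushed

end RightFlushed

/-! ### `ν`-trees -/

section Trees

variable {ν : List Bool} {T : Set (ℕ × ℕ)} {c d : ℕ → ℕ}

/-- The row sizes `c 0, …, c n` are those of a `ν`-path: the path leaves row `y` at the abscissa
`entryAbscissa c (y + 1)`, where it has to be weakly above `ν`. -/
structure IsNuPathCount (ν : List Bool) (c : ℕ → ℕ) : Prop where
  pos {y : ℕ} : y ≤ northSteps ν → 0 < c y
  exit_mem {y : ℕ} : y ≤ northSteps ν → (entryAbscissa c (y + 1), y) ∈ APts ν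
  exit_top : entryAbscissa c (northSteps ν + 1) = eastSteps ν

lemma IsNuPathCount.congr (hc : IsNuPathCount ν c) (h : ∀ y ≤ northSteps ν, c y = d y) :
    IsNuPathCount ν d where
  pos hy := h _ hy ▸ hc.pos hy
  exit_mem hy := by
    rw [← entryAbscissa_congr fun j hj => h j (by omega)]
    exact hc.exit_mem hy
  exit_top := by
    rw [← entryAbscissa_congr fun j hj => h j (by omega)]
    exact hc.exit_top

lemma pairwise_compatible_iff :
    T.Pairwise (Compatible ν) ↔ ∀ x y, (x, y) ∈ T → x ∉ forbiddenSet ν T y := by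
  constructor
  · rintro hT x y hxy ⟨j, hj, hx, l, hl, hlx⟩
    exact hT hl hxy (by simp [hlx.ne]) (Or.inl ⟨hlx, hj, hx⟩)
  · rintro hT ⟨x, y⟩ hp ⟨x', y'⟩ hq - (⟨hx, hy, hA⟩ | ⟨hx, hy, hA⟩)
    · exact hT x' y' hq ⟨y, hy, hA, x, hp, hx⟩
    · exact hT x y hp ⟨y', hy, hA, x', hq, hx⟩

namespace IsNuTree

lemma notMem_forbiddenSet (hT : IsNuTree ν T) {x y : ℕ} (h : (x, y) ∈ T) :
    x ∉ forbiddenSet ν T y :=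
  pairwise_compatible_iff.1 hT.2.1 x y h

lemma mem_of_notMem_forbiddenSet (hT : IsNuTree ν T) {x y : ℕ} (hxy : (x, y) ∈ APts ν)
    (hx : x ∉ forbiddenSet ν T y)
    (habove : ∀ x' y', (x', y') ∈ T → x < x' → y < y' → (x', y) ∉ APts ν) : (x, y) ∈ T := by
  have hcompat : (insert (x, y) T).Pairwise (Compatible ν) := by
    refine hT.2.1.insert fun ⟨x', y'⟩ h' _ => ⟨?_, ?_⟩
    · rintro (⟨hlt, hy, hA⟩ | ⟨hlt, hy, hA⟩)
      · exact habove x' y' h' hlt hy hA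
      · exact hx ⟨y', hy, hA, x', h', hlt⟩
    · rintro (⟨hlt, hy, hA⟩ | ⟨hlt, hy, hA⟩)
      · exact hx ⟨y', hy, hA, x', h', hlt⟩
      · exact habove x' y' h' hlt hy hA
  exact hT.2.2 _ (Set.insert_subset hxy hT.1) hcompat (Set.subset_insert _ _) ▸
    Set.mem_insert _ _

lemma root_mem (hT : IsNuTree ν T) : (0, northSteps ν) ∈ T :=
  hT.mem_of_notMem_forbiddenSet (zero_mem_APts le_rfl)
    (fun h => lt_irrefl 0 (forbiddenSet_subset_Ioc _ h).1)
    fun _ _ h _ hy => absurd (hT.1 h).2.2 hy.not_ge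

lemma exists_mem_row (hT : IsNuTree ν T) {y : ℕ} (hy : y ≤ northSteps ν) : ∃ x, (x, y) ∈ T := by
  obtain ⟨x, ⟨hxA, y', hyy', hxT⟩, hmax⟩ :=
    Set.exists_max_image {x | (x, y) ∈ APts ν ∧ ∃ y' ≥ y, (x, y') ∈ T} id
      ((finite_row subset_rfl y).sep _) ⟨0, zero_mem_APts hy, northSteps ν, hy, hT.root_mem⟩
  refine ⟨x, hT.mem_of_notMem_forbiddenSet hxA
    (fun hx => hT.notMem_forbiddenSet hxT (forbiddenSet_mono_right hyy' hx)) ?_⟩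
  exact fun z k hz hxz hyk hzA => (hmax z ⟨hzA, k, hyk.le, hz⟩).not_gt hxz

lemma isRightFlushed (hT : IsNuTree ν T) : IsRightFlushed ν T where
  subset := hT.1
  notMem_forbiddenSet := hT.notMem_forbiddenSet
  mem_of_lt {l _ y} hl hlx hxA hx := hT.mem_of_notMem_forbiddenSet hxA hx fun _ _ hz hxz hyk hzA =>
    hT.notMem_forbiddenSet hz ⟨y, hyk, hzA, l, hl, hlx.trans hxz⟩

lemma isNuPathCount_rowCount (hT : IsNuTree ν T) : IsNuPathCount ν (rowCount T) where
  pos {y} hy := (Set.ncard_pos (finite_row hT.1 y)).2 (hT.exists_mem_row hy)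
  exit_mem {y} hy := by
    have hsub : forbiddenSet ν T (y + 1) ⊆ Set.Ioo 0 (rowCount (APts ν) y) := by
      rintro x ⟨j, hj, hxA, l, -, hlx⟩
      exact ⟨Nat.zero_lt_of_lt hlx,
        mem_APts_iff_lt_rowCount.1 (mem_APts_of_le_right hxA (Nat.lt_succ_iff.1 hj) hy)⟩
    have hcard := Set.ncard_le_ncard hsub (Set.finite_Ioo _ _)
    rw [hT.isRightFlushed.ncard_forbiddenSet, Set.ncard_Ioo_nat] at hcard
    have hpos := mem_APts_iff_lt_rowCount.1 (zero_mem_APts hy)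
    rw [mem_APts_iff_lt_rowCount]
    omega
  exit_top := by
    have forbidden_eq : forbiddenSet ν T (northSteps ν + 1) = Set.Ioc 0 (eastSteps ν) :=
      (forbiddenSet_subset_Ioc _).antisymm fun x hx =>
        ⟨northSteps ν, Nat.lt_succ_self _, top_mem_APts hx.2, 0, hT.root_mem, hx.1⟩
    rw [← hT.isRightFlushed.ncard_forbiddenSet, forbidden_eq, Set.ncard_Ioc_nat, Nat.sub_zero]

end IsNuTree

namespace IsRightFlushed

lemma forbiddenSet_eq_Ioc (hT : IsRightFlushed ν T) (hc : IsNuPathCount ν (rowCount T)) :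
    forbiddenSet ν T (northSteps ν + 1) = Set.Ioc 0 (eastSteps ν) := by
  refine Set.eq_of_subset_of_ncard_le (forbiddenSet_subset_Ioc _) ?_ (Set.finite_Ioc _ _)
  rw [hT.ncard_forbiddenSet, hc.exit_top, Set.ncard_Ioc_nat, Nat.sub_zero]

/-- The leftmost point of row `y` lies to the right of `x ≥ 0`, so its abscissa is eventually
forbidden; this only happens above a row in which it carries a point of `T`. -/
lemma exists_mem_of_notMem (hT : IsRightFlushed ν T) (hc : IsNuPathCount ν (rowCount T)) {x y : ℕ}
    (hxA : (x, y) ∈ APts ν) (hxF : x ∉ forbiddenSet ν T y) (hxT : (x, y) ∉ T) :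
    ∃ x' y', (x', y') ∈ T ∧ x < x' ∧ y < y' ∧ (x', y) ∈ APts ν := by
  have hy : y ≤ northSteps ν := hxA.2.2
  have hfin := finite_row hT.subset y
  obtain ⟨l, hl, hmin⟩ :=
    Set.exists_min_image {x | (x, y) ∈ T} id hfin ((Set.ncard_pos hfin).1 (hc.pos hy))
  have hxl : x < l := by
    rcases lt_trichotomy x l with h | rfl | h
    · exact h
    · exact absurd hl hxT
    · exact absurd (hT.mem_of_lt hl h hxA hxF) hxT
  have hlF : l ∈ forbiddenSet ν T (northSteps ν + 1) :=
    hT.forbiddenSet_eq_Ioc hc ▸ ⟨Nat.zero_lt_of_lt hxl, (hT.subset hl).1⟩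
  obtain ⟨j, hyj, hlj, l', hl', hlt⟩ :=
    hT.exists_mem_of_mem_forbiddenSet (Nat.le_succ_of_le hy) (hT.notMem_forbiddenSet hl) hlF
  obtain rfl | hyj := hyj.eq_or_lt
  · exact absurd (hmin l' hl') hlt.not_ge
  · exact ⟨l, j, hlj, hxl, hyj, hT.subset hl⟩

lemma isNuTree (hT : IsRightFlushed ν T) (hc : IsNuPathCount ν (rowCount T)) : IsNuTree ν T := by
  refine ⟨hT.subset, pairwise_compatible_iff.2 fun x y => hT.notMem_forbiddenSet, ?_⟩
  refine fun T' hT'A hT' hTT' => hTT'.antisymm' fun ⟨x, y⟩ hxy => ?_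
  by_contra hxT
  obtain ⟨x', y', hmem, hx, hy, hA⟩ := hT.exists_mem_of_notMem hc (hT'A hxy)
    (fun h => pairwise_compatible_iff.1 hT' x y hxy (forbiddenSet_mono hTT' y h)) hxT
  exact pairwise_compatible_iff.1 hT' x' y' (hTT' hmem) ⟨y, hy, hA, x, hxy, hx⟩

end IsRightFlushed

theorem isNuTree_iff :
    IsNuTree ν T ↔ IsRightFlushed ν T ∧ IsNuPathCount ν (rowCount T) :=
  ⟨fun hT => ⟨hT.isRightFlushed, hT.isNuPathCount_rowCount⟩, fun ⟨hT, hc⟩ => hT.isNuTree hc⟩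

end Trees

/-! ### The flushing maps -/

section FlushingMaps

variable {ν μ : List Bool} {T : Set (ℕ × ℕ)} {c : ℕ → ℕ}

lemma mem_forbiddenSet_Rflush {x y : ℕ} (hy : y ≤ northSteps ν + 1) :
    x ∈ forbiddenSet ν (Rflush ν μ) y ↔
      x ∈ flushForbidden (rowAvail ν) (pointsAtHeight μ) y := by
  rw [mem_flushForbidden (pairwise_gt_rowAvail ν)]
  refine exists_congr fun j => and_congr_right fun hj => ?_
  have hj : j ≤ northSteps ν := by omega
  rw [mem_rowAvail hj]
  simp only [mem_Rflush, hj, true_and]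

theorem isRightFlushed_Rflush (ν μ : List Bool) : IsRightFlushed ν (Rflush ν μ) where
  subset := fun ⟨_, _⟩ h =>
    let ⟨hy, hx⟩ := mem_Rflush.1 h
    (mem_rowAvail hy).1 (mem_and_notMem_of_mem_flushPlaced hx).1
  notMem_forbiddenSet h := by
    obtain ⟨hy, hx⟩ := mem_Rflush.1 h
    rw [mem_forbiddenSet_Rflush (Nat.le_succ_of_le hy)]
    exact (mem_and_notMem_of_mem_flushPlaced hx).2
  mem_of_lt hl hlx hxA hx := by
    obtain ⟨hy, hl⟩ := mem_Rflush.1 hl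
    rw [mem_forbiddenSet_Rflush (Nat.le_succ_of_le hy)] at hx
    exact mem_Rflush.2
      ⟨hy, mem_flushPlaced_of_lt (pairwise_gt_rowAvail ν) hl hlx ((mem_rowAvail hy).2 hxA) hx⟩

lemma ncard_setOf_mem_list {α : Type*} {L : List α} (hL : L.Nodup) :
    {x | x ∈ L}.ncard = L.length := by
  rw [← List.coe_toFinset, Set.ncard_coe_finset, List.toFinset_card_of_nodup hL]

lemma rowCount_Rflush_eq_min {y : ℕ} (hy : y ≤ northSteps ν) :
    rowCount (Rflush ν μ) y = min (pointsAtHeight μ y)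
      ({x | (x, y) ∈ APts ν} \ forbiddenSet ν (Rflush ν μ) y).ncard := by
  have hnodup : ∀ j, (rowAvail ν j).Nodup := fun j => (pairwise_gt_rowAvail ν j).imp ne_of_gt
  have row_eq : {x | (x, y) ∈ Rflush ν μ} =
      {x | x ∈ flushPlaced (rowAvail ν) (pointsAtHeight μ) y} := by
    simp only [mem_Rflush, hy, true_and]
  have available_eq : {x | (x, y) ∈ APts ν} \ forbiddenSet ν (Rflush ν μ) y =
      {x | x ∈ (rowAvail ν y).filter
        fun x => decide (x ∉ flushForbidden (rowAvail ν) (pointsAtHeight μ) y)} := by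
    ext x
    simp [mem_forbiddenSet_Rflush (Nat.le_succ_of_le hy), mem_rowAvail hy]
  rw [rowCount, row_eq, available_eq, ncard_setOf_mem_list (nodup_flushPlaced hnodup _ _),
    ncard_setOf_mem_list ((hnodup y).filter _), flushPlaced, List.length_take]

theorem rowCount_Rflush (hc : IsNuPathCount ν (pointsAtHeight μ)) {y : ℕ}
    (hy : y ≤ northSteps ν) : rowCount (Rflush ν μ) y = pointsAtHeight μ y := by
  induction y using Nat.strong_induction_on with
  | h y ih =>
    have ncard_forbidden : (forbiddenSet ν (Rflush ν μ) y).ncard =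
        entryAbscissa (pointsAtHeight μ) y := by
      rw [(isRightFlushed_Rflush ν μ).ncard_forbiddenSet]
      exact entryAbscissa_congr fun j hj => ih j hj (hj.le.trans hy)
    have enough_room : entryAbscissa (pointsAtHeight μ) y + pointsAtHeight μ y ≤
        rowCount (APts ν) y := by
      rw [entryAbscissa_add_self (hc.pos hy)]
      exact mem_APts_iff_lt_rowCount.1 (hc.exit_mem hy)
    rw [rowCount_Rflush_eq_min hy, min_eq_left]
    calc pointsAtHeight μ y
        ≤ rowCount (APts ν) y - (forbiddenSet ν (Rflush ν μ) y).ncard := by omega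
      _ ≤ _ := Set.le_ncard_sdiff _ _ (finite_forbiddenSet y)

theorem isNuTree_Rflush (hc : IsNuPathCount ν (pointsAtHeight μ)) : IsNuTree ν (Rflush ν μ) :=
  isNuTree_iff.2 ⟨isRightFlushed_Rflush ν μ, hc.congr fun _ hy => (rowCount_Rflush hc hy).symm⟩

lemma take_filter_notMem_range {e k n : ℕ} (h : e + k ≤ n) :
    ((List.range n).filter fun x => decide (x ∉ List.range e)).take k = List.range' e k := by
  have split_range : List.range n = List.range e ++ List.range' e (n - e) := by
    have h := List.range'_append_1 (s := 0) (m := e) (n := n - e)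
    rw [Nat.zero_add, Nat.add_sub_of_le (by omega)] at h
    rw [List.range_eq_range', List.range_eq_range', h]
  rw [split_range, List.filter_append, List.filter_eq_nil_iff.2 (by simp),
    List.filter_eq_self.2 (by simp +contextual), List.nil_append,
    List.take_range'_of_length_ge (by omega)]

lemma flushForbidden_range {m y : ℕ} (hy : entryAbscissa c y ≤ m) :
    flushForbidden (fun _ => List.range (m + 1)) c y = List.range (entryAbscissa c y) := by
  induction y with
  | zero => rfl
  | succ y ih =>
    have hentry := (monotone_entryAbscissa c y.le_succ).trans hy
    rw [entryAbscissa_succ] at hy ⊢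
    rw [flushForbidden, ih hentry, take_filter_notMem_range (by omega), List.dropLast_eq_take,
      List.length_range', List.take_range'_of_length_ge (by omega), List.range_eq_range',
      List.range_eq_range']
    simpa only [Nat.zero_add] using List.range'_append_1 (s := 0)

lemma flushPlaced_range {m y : ℕ} (hy : entryAbscissa c (y + 1) ≤ m) :
    flushPlaced (fun _ => List.range (m + 1)) c y = List.range' (entryAbscissa c y) (c y) := by
  have hentry := (monotone_entryAbscissa c y.le_succ).trans hy
  rw [entryAbscissa_succ] at hy
  rw [flushPlaced, flushForbidden_range hentry, take_filter_notMem_range (by omega)]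

theorem Lflush_eq_staircase (hc : IsNuPathCount ν (rowCount T)) :
    Lflush ν T = staircase (northSteps ν) (rowCount T) := by
  ext ⟨x, y⟩
  rw [mem_Lflush]
  refine and_congr_right fun hy => ?_
  rw [flushPlaced_range (hc.exit_mem hy).1, List.mem_range'_1, Set.mem_Ico]

theorem isNuPath_iff :
    IsNuPath ν μ ↔ northSteps μ = northSteps ν ∧ IsNuPathCount ν (pointsAtHeight μ) := by
  have points_mem : (∀ i ≤ μ.length, pointAt μ i ∈ APts ν) ↔
      staircase (northSteps μ) (pointsAtHeight μ) ⊆ APts ν := by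
    rw [← pathPointSet_eq_staircase]
    exact ⟨fun h p ⟨i, hi, hp⟩ => hp ▸ h i hi, fun h i hi => h ⟨i, hi, rfl⟩⟩
  have east := entryAbscissa_pointsAtHeight_northSteps μ
  rw [IsNuPath, points_mem]
  constructor
  · rintro ⟨heast, hnorth, hsub⟩
    rw [hnorth] at hsub east
    have hpos {y : ℕ} (hy : y ≤ northSteps ν) := pointsAtHeight_pos μ (hy.trans_eq hnorth.symm)
    refine ⟨hnorth, hpos, fun {y} hy => hsub ⟨hy, ?_⟩, east.trans heast⟩
    rw [Set.mem_Ico, entryAbscissa_add_self (hpos hy)]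
    exact ⟨monotone_entryAbscissa _ y.le_succ, Nat.lt_succ_self _⟩
  · rintro ⟨hnorth, hc⟩
    rw [hnorth] at east ⊢
    refine ⟨east.symm.trans hc.exit_top, rfl, ?_⟩
    rintro ⟨x, y⟩ ⟨hy, -, hx⟩
    rw [entryAbscissa_add_self (hc.pos hy)] at hx
    exact mem_APts_of_le_left (hc.exit_mem hy) (Nat.lt_succ_iff.1 hx)

lemma exists_isNuPath_and_pointsAtHeight_eq (hc : IsNuPathCount ν c) :
    ∃ μ, IsNuPath ν μ ∧ ∀ y ≤ northSteps ν, pointsAtHeight μ y = c y := by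
  obtain ⟨μ, north, count⟩ := exists_northSteps_eq_and_pointsAtHeight_eq fun _ => hc.pos
  exact ⟨μ, isNuPath_iff.2 ⟨north, hc.congr fun y hy => (count y hy).symm⟩, count⟩

theorem Lflush_eq_pathPointSet_iff (hT : IsNuTree ν T) (hμ : IsNuPath ν μ) :
    Lflush ν T = pathPointSet μ ↔ ∀ y ≤ northSteps ν, rowCount T y = pointsAtHeight μ y := by
  rw [Lflush_eq_staircase hT.isNuPathCount_rowCount, pathPointSet_eq_staircase, hμ.2.1]
  refine ⟨fun h y hy => ?_, staircase_congr⟩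
  rw [← rowCount_staircase (rowCount T) hy, h, rowCount_staircase _ hy]

end FlushingMaps

theorem flushing_bijections (ν : List Bool) :
    (∀ μ, IsNuPath ν μ →
      (∀ y ≤ northSteps ν, rowCount (Rflush ν μ) y = pointsAtHeight μ y) ∧
      IsNuTree ν (Rflush ν μ)) ∧
    (∀ T, IsNuTree ν T → ∃ μ, IsNuPath ν μ ∧ Lflush ν T = pathPointSet μ) ∧
    (∀ μ, IsNuPath ν μ → Lflush ν (Rflush ν μ) = pathPointSet μ) ∧
    (∀ T, IsNuTree ν T → ∀ μ, IsNuPath ν μ → Lflush ν T = pathPointSet μ →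
      Rflush ν μ = T) := by
  have Rflush_spec : ∀ μ, IsNuPath ν μ →
      (∀ y ≤ northSteps ν, rowCount (Rflush ν μ) y = pointsAtHeight μ y) ∧
        IsNuTree ν (Rflush ν μ) := fun μ hμ =>
    have hc := (isNuPath_iff.1 hμ).2
    ⟨fun _ => rowCount_Rflush hc, isNuTree_Rflush hc⟩
  refine ⟨Rflush_spec, fun T hT => ?_, fun μ hμ => ?_, fun T hT μ hμ hL => ?_⟩
  · obtain ⟨μ, hμ, count⟩ := exists_isNuPath_and_pointsAtHeight_eq hT.isNuPathCount_rowCount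
    exact ⟨μ, hμ, (Lflush_eq_pathPointSet_iff hT hμ).2 fun y hy => (count y hy).symm⟩
  · obtain ⟨count, hT⟩ := Rflush_spec μ hμ
    exact (Lflush_eq_pathPointSet_iff hT hμ).2 count
  · have count := (Lflush_eq_pathPointSet_iff hT hμ).1 hL
    exact (isRightFlushed_Rflush ν μ).eq_of_rowCount_eq hT.isRightFlushed fun y hy =>
      ((Rflush_spec μ hμ).1 y hy).trans (count y hy).symm
end

section
/- Let ν be a lattice path and let μ, μ' be ν-paths. Then μ ⋖_ν μ' is a covering relation of the ν-Tamari lattice if and only if the ν-tree R(μ') is obtained from the ν-tree R(μ) by a right rotation. -/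
open scoped Classical

/-!
Row by row, right-flushing works like a stack of usable columns: entering row `y` pushes the
columns of `A_ν` that first occur there, and placing `a + 1` points in the row pops the `a`
rightmost usable columns, the column of the leftmost point becoming the new top. The height of the
stack after row `y` is one more than the horizontal distance of the last point of `μ` in row `y`.
Hence the column of the leftmost point of row `y` recurs first in the row `y'` in which this
distance is first back at or below its value in row `y`, and this is the row of the point `q` that
defines the cover at a valley in row `y`. The cover moves one east step from row `y` to row `y'`,
so one column `x''` popped in row `y` instead survives on the stack, directly above the column `x`
of the leftmost point, until it is popped in row `y'`: `(x'', y')` replaces the point `(x, y)`.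
-/

/-! ### Right-flushing as a stack -/

/-- `y'` is the first index after `y` at which `s` is back at or below its value at `y`. -/
structure IsFirstReturn (s : ℕ → ℕ) (y y' : ℕ) : Prop where
  lt : y < y'
  le : s y' ≤ s y
  lt_between : ∀ b, y < b → b < y' → s y < s b

theorem lt_of_forall_not_isFirstReturn {s : ℕ → ℕ} {y y' : ℕ}
    (h : ∀ b < y', ¬IsFirstReturn s y b) (b : ℕ) (hyb : y < b) (hby' : b < y') : s y < s b := by
  induction b using Nat.strong_induction_on with
  | _ b ih =>
    by_contra! hle
    exact h b hby' ⟨hyb, hle, fun c hyc hcb => ih c hcb hyc (hcb.trans hby')⟩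

theorem isFirstReturn_add_const_iff {s : ℕ → ℕ} {y y' c : ℕ} :
    IsFirstReturn (fun b => s b + c) y y' ↔ IsFirstReturn s y y' :=
  ⟨fun h => ⟨h.lt, Nat.le_of_add_le_add_right h.le,
      fun b hb hb' => Nat.lt_of_add_lt_add_right (h.lt_between b hb hb')⟩,
    fun h => ⟨h.lt, Nat.add_le_add_right h.le c,
      fun b hb hb' => Nat.add_lt_add_right (h.lt_between b hb hb') c⟩⟩

/-- The sequence `a'` arises from `a` by moving one unit from index `y` to index `y'`. -/
def MovesUnit (a a' : ℕ → ℕ) (y y' : ℕ) : Prop :=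
  a' + Pi.single y 1 = a + Pi.single y' 1

namespace MovesUnit

variable {a a' : ℕ → ℕ} {y y' : ℕ}

theorem source (h : MovesUnit a a' y y') (hne : y ≠ y') : a y = a' y + 1 := by
  simpa [hne] using (congrFun h y).symm

theorem target (h : MovesUnit a a' y y') (hne : y ≠ y') : a' y' = a y' + 1 := by
  simpa [hne.symm] using congrFun h y'

theorem of_ne (h : MovesUnit a a' y y') {k : ℕ} (hk : k ≠ y) (hk' : k ≠ y') : a' k = a k := by
  simpa [hk, hk'] using congrFun h k

theorem intro (hne : y ≠ y') (hy : a y = a' y + 1) (hy' : a' y' = a y' + 1)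
    (h : ∀ k, k ≠ y → k ≠ y' → a' k = a k) : MovesUnit a a' y y' := by
  ext k
  rcases eq_or_ne k y with rfl | hky
  · simp [hne, hy]
  rcases eq_or_ne k y' with rfl | hky'
  · simp [hne.symm, hy']
  · simp [hky, hky', h k hky hky']

end MovesUnit

section FlushStack

variable {α : Type*}

/-- The stack of columns that are still usable before row `y` is filled, leftmost column at the
bottom: in row `y` the columns `new y` are pushed and then `a y` columns are popped. -/
def flushStack (new : ℕ → List α) (a : ℕ → ℕ) : ℕ → List α
  | 0 => []
  | y + 1 => (new y ++ flushStack new a y).drop (a y)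

/-- The columns usable in row `y`, rightmost first. -/
def flushAvail (new : ℕ → List α) (a : ℕ → ℕ) (y : ℕ) : List α :=
  new y ++ flushStack new a y

/-- The columns occupied in row `y`: the popped ones and the one that becomes the top of the
stack. -/
def flushRow (new : ℕ → List α) (a : ℕ → ℕ) (y : ℕ) : List α :=
  (flushAvail new a y).take (a y + 1)

/-- The height of the stack after row `y`. -/
def flushHeight (new : ℕ → List α) (a : ℕ → ℕ) (y : ℕ) : ℕ :=
  (flushStack new a (y + 1)).length

variable {new : ℕ → List α} {a a' : ℕ → ℕ}

theorem flushStack_succ (y : ℕ) : flushStack new a (y + 1) = (flushAvail new a y).drop (a y) :=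
  rfl

theorem flushHeight_eq (y : ℕ) :
    flushHeight new a y = (flushAvail new a y).length - a y := by
  rw [flushHeight, flushStack_succ, List.length_drop]

theorem length_flushRow {y : ℕ} (ha : a y < (flushAvail new a y).length) :
    (flushRow new a y).length = a y + 1 := by
  simp only [flushRow, List.length_take]
  omega

theorem exists_flushStack_succ_eq_cons {y : ℕ} (ha : a y < (flushAvail new a y).length) :
    ∃ l S, flushStack new a (y + 1) = l :: S :=
  ⟨_, _, List.drop_eq_getElem_cons ha⟩

theorem flushAvail_eq_take_append_flushStack (y : ℕ) :
    flushAvail new a y = (flushAvail new a y).take (a y) ++ flushStack new a (y + 1) :=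
  (List.take_append_drop _ _).symm

theorem flushRow_eq_take_append_top {y : ℕ} {l : α} {S : List α}
    (hl : flushStack new a (y + 1) = l :: S) :
    flushRow new a y = (flushAvail new a y).take (a y) ++ [l] := by
  rw [flushRow, List.take_add, ← flushStack_succ, hl, List.take_succ_cons, List.take_zero]

theorem top_mem_flushRow {y : ℕ} {l : α} {S : List α}
    (hl : flushStack new a (y + 1) = l :: S) : l ∈ flushRow new a y := by
  simp [flushRow_eq_take_append_top hl]

theorem flushStack_eq_of_le {m k : ℕ} (hmk : m ≤ k)
    (hm : flushStack new a' m = flushStack new a m) (h : ∀ b, m ≤ b → b < k → a' b = a b) :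
    flushStack new a' k = flushStack new a k := by
  induction k, hmk using Nat.le_induction with
  | base => exact hm
  | succ k hmk ih =>
    rw [flushStack, flushStack, ih fun b hb hbk => h b hb (by omega), h k hmk (by omega)]

theorem flushAvail_congr {k : ℕ} (h : flushStack new a' k = flushStack new a k) :
    flushAvail new a' k = flushAvail new a k := by
  rw [flushAvail, flushAvail, h]

theorem flushRow_congr {k : ℕ} (h : flushStack new a' k = flushStack new a k) (hk : a' k = a k) :
    flushRow new a' k = flushRow new a k := by
  rw [flushRow, flushRow, flushAvail_congr h, hk]

/-- As long as the stack stays higher than it is after row `y`, its content after row `y` lies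
untouched at the bottom, so that another process with the same pops sees the same columns on top
of its own content after row `y`. -/
theorem exists_flushAvail_eq_append {y k : ℕ} (hyk : y < k)
    (hpop : ∀ b, y < b → b < k → a' b = a b)
    (hlt : ∀ b, y < b → b < k → flushHeight new a y < flushHeight new a b) :
    ∃ B, flushAvail new a k = B ++ flushStack new a (y + 1) ∧
      flushAvail new a' k = B ++ flushStack new a' (y + 1) := by
  induction k, hyk using Nat.le_induction with
  | base => exact ⟨new (y + 1), rfl, rfl⟩
  | succ k hyk ih =>
    obtain ⟨B, hB, hB'⟩ := ih (fun b hb hbk => hpop b hb (by omega))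
      (fun b hb hbk => hlt b hb (by omega))
    have hlen : a k ≤ B.length := by
      have := hlt k hyk (by omega)
      rw [flushHeight_eq k, hB, List.length_append, flushHeight] at this
      omega
    refine ⟨new (k + 1) ++ B.drop (a k), ?_, ?_⟩
    · rw [flushAvail, flushStack_succ, hB, List.drop_append_of_le_length hlen, List.append_assoc]
    · rw [flushAvail, flushStack_succ, hB', hpop k hyk (by omega),
        List.drop_append_of_le_length hlen, List.append_assoc]

theorem flushStack_sublist (y : ℕ) : (flushStack new a y).Sublist (flushStack new 0 y) := by
  induction y with
  | zero => exact List.Sublist.refl _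
  | succ y ih => exact (List.drop_sublist _ _).trans (ih.append_left _)

theorem flushAvail_sublist (y : ℕ) :
    (flushAvail new a y).Sublist (flushStack new 0 (y + 1)) :=
  (flushStack_sublist y).append_left _

theorem nodup_flushAvail (hnew : ∀ y, (flushStack new 0 y).Nodup) (a : ℕ → ℕ) (y : ℕ) :
    (flushAvail new a y).Nodup :=
  (hnew (y + 1)).sublist (flushAvail_sublist y)

theorem flushStack_zero_subset {y k : ℕ} (hyk : y ≤ k) :
    flushStack new 0 y ⊆ flushStack new 0 k := by
  induction k, hyk using Nat.le_induction with
  | base => exact List.Subset.refl _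
  | succ k _ ih => exact List.subset_append_of_subset_right _ ih

theorem mem_flushStack_of_mem_flushAvail (hnew : ∀ y, (flushStack new 0 y).Nodup) {y k : ℕ}
    (hyk : y < k) {x : α} (hx : x ∈ flushAvail new a y) (hxk : x ∈ flushAvail new a k) :
    x ∈ flushStack new a (y + 1) := by
  have mem_stack : ∀ k, y < k → x ∈ flushAvail new a k → x ∈ flushStack new a k := by
    intro k hyk hxk
    have hpushed : x ∈ flushStack new 0 k :=
      flushStack_zero_subset hyk ((flushAvail_sublist y).subset hx)
    have hdisj : List.Disjoint (new k) (flushStack new 0 k) :=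
      List.disjoint_of_nodup_append (hnew (k + 1))
    exact (List.mem_append.1 hxk).resolve_left fun h => hdisj h hpushed
  induction k, hyk using Nat.le_induction with
  | base => exact mem_stack _ (Nat.lt_succ_self y) hxk
  | succ k hyk ih => exact ih (List.drop_subset _ _ (mem_stack _ (by omega) hxk))

/-- A popped column is never used again, so only the leftmost column of a row can recur. -/
theorem eq_top_of_mem_flushRow_of_mem_flushRow (hnew : ∀ y, (flushStack new 0 y).Nodup) {y k : ℕ}
    (hyk : y < k) {l x : α} {S : List α} (hl : flushStack new a (y + 1) = l :: S)
    (hx : x ∈ flushRow new a y) (hxk : x ∈ flushRow new a k) : x = l := by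
  have hxS : x ∈ flushStack new a (y + 1) :=
    mem_flushStack_of_mem_flushAvail hnew hyk (List.take_subset _ _ hx) (List.take_subset _ _ hxk)
  have hdisj : List.Disjoint ((flushAvail new a y).take (a y)) (flushStack new a (y + 1)) :=
    List.disjoint_of_nodup_append <|
      flushAvail_eq_take_append_flushStack (new := new) y ▸ nodup_flushAvail hnew a y
  rw [flushRow_eq_take_append_top hl, List.mem_append, List.mem_singleton] at hx
  exact hx.resolve_left fun h => hdisj h hxS

theorem top_mem_flushRow_iff (hnew : ∀ y, (flushStack new 0 y).Nodup) {y k : ℕ} (hyk : y < k)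
    (hlt : ∀ b, y < b → b < k → flushHeight new a y < flushHeight new a b)
    {l : α} {S : List α} (hl : flushStack new a (y + 1) = l :: S) :
    l ∈ flushRow new a k ↔ flushHeight new a k ≤ flushHeight new a y := by
  obtain ⟨B, hB, -⟩ := exists_flushAvail_eq_append hyk (fun _ _ _ => rfl) hlt
  have hlB : l ∉ B := fun hmem =>
    List.disjoint_of_nodup_append (hB ▸ nodup_flushAvail hnew a k) hmem (by simp [hl])
  rw [flushHeight_eq k, flushHeight, flushRow, hB, hl, List.length_append, List.take_append,
    List.mem_append]
  rcases le_or_gt B.length (a k) with hle | hlt'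
  · rw [Nat.succ_sub hle, List.take_succ_cons]
    simp only [List.mem_cons, true_or, or_true, List.length_cons, true_iff]
    omega
  · rw [Nat.sub_eq_zero_of_le hlt', List.take_zero]
    have : l ∉ B.take (a k + 1) := fun h => hlB (List.take_subset _ _ h)
    simp only [this, List.not_mem_nil, or_self, List.length_cons, false_iff]
    omega

theorem flushRow_eq_append_top_of_succ {y : ℕ} {l : α} {S : List α}
    (hl : flushStack new a (y + 1) = l :: S)
    (hstack : flushStack new a' y = flushStack new a y) (hy : a y = a' y + 1) :
    flushRow new a y = flushRow new a' y ++ [l] := by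
  rw [flushRow_eq_take_append_top hl, flushRow, flushAvail_congr hstack, hy]

theorem exists_flushStack_succ_eq_cons_of_succ {y : ℕ} (ha : a y < (flushAvail new a y).length)
    (hstack : flushStack new a' y = flushStack new a y) (hy : a y = a' y + 1) :
    ∃ x, flushStack new a' (y + 1) = x :: flushStack new a (y + 1) := by
  refine ⟨(flushAvail new a y)[a' y], ?_⟩
  rw [flushStack_succ, flushStack_succ, flushAvail_congr hstack, hy, List.drop_eq_getElem_cons]

theorem flushStack_eq_of_movesUnit_of_le {y y' k : ℕ} (hmove : MovesUnit a a' y y')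
    (hyy' : y < y') (hk : k ≤ y) : flushStack new a' k = flushStack new a k :=
  flushStack_eq_of_le (Nat.zero_le k) rfl fun _ _ _ => hmove.of_ne (by omega) (by omega)

theorem exists_flushAvail_eq_of_movesUnit {y y' k : ℕ} {x : α}
    (hret : IsFirstReturn (flushHeight new a) y y') (hmove : MovesUnit a a' y y')
    (hx : flushStack new a' (y + 1) = x :: flushStack new a (y + 1)) (hyk : y < k)
    (hky' : k ≤ y') :
    ∃ B, flushAvail new a k = B ++ flushStack new a (y + 1) ∧
      flushAvail new a' k = B ++ x :: flushStack new a (y + 1) := by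
  obtain ⟨B, hB, hB'⟩ := exists_flushAvail_eq_append (new := new) (a := a) (a' := a') hyk
    (fun b _ _ => hmove.of_ne (by omega) (by omega))
    (fun b hyb hbk => hret.lt_between b hyb (by omega))
  exact ⟨B, hB, hx ▸ hB'⟩

theorem flushRow_between_of_movesUnit {y y' k : ℕ} {x : α}
    (hret : IsFirstReturn (flushHeight new a) y y') (hmove : MovesUnit a a' y y')
    (hx : flushStack new a' (y + 1) = x :: flushStack new a (y + 1)) (hyk : y < k)
    (hky' : k < y') :
    ∃ B, flushAvail new a' k = B ++ x :: flushStack new a (y + 1) ∧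
      flushRow new a k = B.take (a k + 1) ∧ flushRow new a' k = B.take (a k + 1) := by
  obtain ⟨B, hB, hB'⟩ := exists_flushAvail_eq_of_movesUnit hret hmove hx hyk hky'.le
  have hlen : a k + 1 ≤ B.length := by
    have hlt := hret.lt_between k hyk hky'
    rw [flushHeight_eq k, hB, List.length_append, flushHeight] at hlt
    omega
  refine ⟨B, hB', ?_, ?_⟩
  · rw [flushRow, hB, List.take_append_of_le_length hlen]
  · rw [flushRow, hB', hmove.of_ne (by omega) (by omega), List.take_append_of_le_length hlen]

theorem notMem_flushRow_between_of_movesUnit (hnew : ∀ y, (flushStack new 0 y).Nodup)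
    {y y' k : ℕ} {x : α} (hret : IsFirstReturn (flushHeight new a) y y')
    (hmove : MovesUnit a a' y y')
    (hx : flushStack new a' (y + 1) = x :: flushStack new a (y + 1)) (hyk : y < k)
    (hky' : k < y') : x ∉ flushRow new a k := fun hmem => by
  obtain ⟨B, hB, hrow, -⟩ := flushRow_between_of_movesUnit hret hmove hx hyk hky'
  exact List.disjoint_of_nodup_append (hB ▸ nodup_flushAvail hnew a' k)
    (List.take_subset _ _ (hrow ▸ hmem)) List.mem_cons_self

theorem exists_flushAvail_target_of_movesUnit {y y' : ℕ} {x : α}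
    (hret : IsFirstReturn (flushHeight new a) y y') (hmove : MovesUnit a a' y y')
    (hx : flushStack new a' (y + 1) = x :: flushStack new a (y + 1)) :
    ∃ B, flushAvail new a y' = B ++ flushStack new a (y + 1) ∧
      flushAvail new a' y' = B ++ x :: flushStack new a (y + 1) ∧ B.length ≤ a y' := by
  obtain ⟨B, hB, hB'⟩ := exists_flushAvail_eq_of_movesUnit hret hmove hx hret.lt le_rfl
  have hle := hret.le
  rw [flushHeight_eq y', hB, List.length_append, flushHeight] at hle
  exact ⟨B, hB, hB', by omega⟩

theorem mem_flushRow_target_of_movesUnit {y y' : ℕ} {x : α}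
    (hret : IsFirstReturn (flushHeight new a) y y') (hmove : MovesUnit a a' y y')
    (hx : flushStack new a' (y + 1) = x :: flushStack new a (y + 1)) (z : α) :
    z ∈ flushRow new a' y' ↔ z = x ∨ z ∈ flushRow new a y' := by
  obtain ⟨B, hB, hB', hlen⟩ := exists_flushAvail_target_of_movesUnit hret hmove hx
  rw [flushRow, flushRow, hB, hB', hmove.target hret.lt.ne, List.take_append, List.take_append,
    List.take_of_length_le (by omega), List.take_of_length_le (i := a y' + 1) (by omega),
    Nat.succ_sub (by omega), List.take_succ_cons]
  simp only [List.mem_append, List.mem_cons]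
  exact or_left_comm

theorem flushStack_eq_of_movesUnit_of_lt {y y' k : ℕ} {x : α}
    (hret : IsFirstReturn (flushHeight new a) y y') (hmove : MovesUnit a a' y y')
    (hx : flushStack new a' (y + 1) = x :: flushStack new a (y + 1)) (hk : y' < k) :
    flushStack new a' k = flushStack new a k := by
  obtain ⟨B, hB, hB', hlen⟩ := exists_flushAvail_target_of_movesUnit hret hmove hx
  refine flushStack_eq_of_le hk ?_ fun b hb _ => hmove.of_ne (by have := hret.lt; omega) (by omega)
  rw [flushStack_succ, flushStack_succ, hB, hB', hmove.target hret.lt.ne, List.drop_append,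
    List.drop_append, List.drop_of_length_le hlen, List.drop_of_length_le (by omega),
    Nat.succ_sub hlen, List.drop_succ_cons]

theorem flushRow_eq_of_movesUnit {y y' k : ℕ} {x : α}
    (hret : IsFirstReturn (flushHeight new a) y y') (hmove : MovesUnit a a' y y')
    (hx : flushStack new a' (y + 1) = x :: flushStack new a (y + 1)) (hk : k ≠ y) (hk' : k ≠ y') :
    flushRow new a' k = flushRow new a k := by
  have heq := hmove.of_ne hk hk'
  rcases lt_or_gt_of_ne hk with hlt | hgt
  · exact flushRow_congr (flushStack_eq_of_movesUnit_of_le hmove hret.lt hlt.le) heq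
  rcases lt_or_gt_of_ne hk' with hlt' | hgt'
  · obtain ⟨B, -, hrow, hrow'⟩ := flushRow_between_of_movesUnit hret hmove hx hgt hlt'
    rw [hrow, hrow']
  · exact flushRow_congr (flushStack_eq_of_movesUnit_of_lt hret hmove hx hgt') heq

theorem nodup_flushRow (hnew : ∀ y, (flushStack new 0 y).Nodup) (a : ℕ → ℕ) (y : ℕ) :
    (flushRow new a y).Nodup :=
  (nodup_flushAvail hnew a y).sublist (List.take_sublist _ _)

end FlushStack

section Forbidden

variable {α : Type*} [DecidableEq α]

theorem filter_notMem_take {L : List α} (hL : L.Nodup) (c : ℕ) :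
    L.filter (· ∉ L.take c) = L.drop c := by
  have hdisj : List.Disjoint (L.take c) (L.drop c) := List.disjoint_take_drop hL le_rfl
  conv_lhs => enter [2]; rw [← List.take_append_drop c L]
  rw [List.filter_append, List.filter_eq_nil_iff.2 (by simp),
    List.filter_eq_self.2 (by simpa using fun x hx hx' => hdisj hx' hx), List.nil_append]

/-- `forb` lists the columns popped before row `y`: the columns forbidden to right-flushing. -/
structure IsForbidden (new : ℕ → List α) (a : ℕ → ℕ) (y : ℕ) (forb : List α) : Prop where
  subset : forb ⊆ flushStack new 0 y
  filter_eq : (flushStack new 0 y).filter (· ∉ forb) = flushStack new a y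

namespace IsForbidden

variable {new : ℕ → List α} {a : ℕ → ℕ} {y : ℕ} {forb : List α}

theorem filter_flushStack_succ (h : IsForbidden new a y forb)
    (hnew : (flushStack new 0 (y + 1)).Nodup) :
    (flushStack new 0 (y + 1)).filter (· ∉ forb) = flushAvail new a y := by
  have hdisj : List.Disjoint (new y) (flushStack new 0 y) := List.disjoint_of_nodup_append hnew
  change (new y ++ flushStack new 0 y).filter (· ∉ forb) = _
  rw [List.filter_append, h.filter_eq, flushAvail,
    List.filter_eq_self.2 (by simpa using fun x hx hxf => hdisj hx (h.subset hxf))]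

theorem succ (h : IsForbidden new a y forb) (hnew : (flushStack new 0 (y + 1)).Nodup) :
    IsForbidden new a (y + 1) (forb ++ (flushAvail new a y).take (a y)) where
  subset := List.append_subset.2 ⟨List.subset_append_of_subset_right _ h.subset,
    fun _ hx => (flushAvail_sublist y).subset (List.take_subset _ _ hx)⟩
  filter_eq := by
    have hnodup := hnew.sublist (flushAvail_sublist (a := a) y)
    rw [flushStack_succ (a := a), ← filter_notMem_take hnodup]
    conv_rhs => enter [2]; rw [← h.filter_flushStack_succ hnew]
    rw [List.filter_filter]
    simp [Bool.and_comm]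

end IsForbidden

end Forbidden

/-- The points occupied in the rows up to `n`. -/
def flushPoints (n : ℕ) (new : ℕ → List ℕ) (a : ℕ → ℕ) : Set (ℕ × ℕ) :=
  {p | p.2 ≤ n ∧ p.1 ∈ flushRow new a p.2}

section FlushPoints

variable {n : ℕ} {new : ℕ → List ℕ} {a a' : ℕ → ℕ}

theorem flushPoints_eq_of_movesUnit (hnew : ∀ y, (flushStack new 0 y).Nodup)
    {y y' x l : ℕ} {S : List ℕ}
    (hret : IsFirstReturn (flushHeight new a) y y') (hmove : MovesUnit a a' y y') (hy' : y' ≤ n)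
    (hl : flushStack new a (y + 1) = l :: S)
    (hx : flushStack new a' (y + 1) = x :: l :: S) :
    flushPoints n new a' = flushPoints n new a \ {(l, y)} ∪ {(x, y')} := by
  have hlt := hret.lt
  rw [← hl] at hx
  have hrow : flushRow new a y = flushRow new a' y ++ [l] :=
    flushRow_eq_append_top_of_succ hl (flushStack_eq_of_movesUnit_of_le hmove hlt le_rfl)
      (hmove.source hlt.ne)
  have hlrow : l ∉ flushRow new a' y := fun h =>
    List.disjoint_of_nodup_append (hrow ▸ nodup_flushRow hnew a y) h (by simp)
  ext ⟨z, k⟩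
  simp only [flushPoints, Set.mem_ofPred_eq, Set.mem_union, Set.mem_sdiff, Set.mem_singleton_iff,
    Prod.mk.injEq]
  rcases eq_or_ne k y with rfl | hky
  · rw [hrow, List.mem_append, List.mem_singleton]
    grind
  rcases eq_or_ne k y' with rfl | hky'
  · rw [mem_flushRow_target_of_movesUnit hret hmove hx]
    tauto
  · rw [flushRow_eq_of_movesUnit hret hmove hx hky hky']
    tauto

theorem notMem_append_of_sortedGT {β : Type*} [Preorder β] {B S : List β} {x l c : β}
    (h : (B ++ x :: l :: S).SortedGT) (hlc : l < c) (hcx : c < x) : c ∉ B ++ x :: l :: S := by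
  have := h.pairwise
  simp only [List.pairwise_append, List.pairwise_cons, List.mem_cons] at this
  simp only [List.mem_append, List.mem_cons]
  grind

theorem sortedGT_flushAvail (hnew : ∀ y, (flushStack new 0 y).SortedGT) (a : ℕ → ℕ) (y : ℕ) :
    (flushAvail new a y).SortedGT :=
  ((hnew (y + 1)).pairwise.sublist (flushAvail_sublist y)).sortedGT

theorem isRightRotation_flushPoints_of_movesUnit (hnew : ∀ y, (flushStack new 0 y).SortedGT)
    (ha : ∀ y, a y < (flushAvail new a y).length) {y y' : ℕ}
    (hret : IsFirstReturn (flushHeight new a) y y') (hmove : MovesUnit a a' y y') (hy' : y' ≤ n) :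
    IsRightRotation (flushPoints n new a) (flushPoints n new a') := by
  have hnodup := fun y => (hnew y).nodup
  have hlt := hret.lt
  have hstack := flushStack_eq_of_movesUnit_of_le (new := new) hmove hlt le_rfl
  have hsrc := hmove.source hlt.ne
  obtain ⟨l, S, hl⟩ := exists_flushStack_succ_eq_cons (ha y)
  obtain ⟨x, hx⟩ := exists_flushStack_succ_eq_cons_of_succ (ha y) hstack hsrc
  have hrow := flushRow_eq_append_top_of_succ hl hstack hsrc
  have hsorted := sortedGT_flushAvail hnew a'
  obtain ⟨B, hB, hB', -⟩ := exists_flushAvail_target_of_movesUnit hret hmove hx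
  have havail : flushAvail new a' y = (flushAvail new a' y).take (a' y) ++ x :: l :: S := by
    rw [← hl, ← hx, ← flushAvail_eq_take_append_flushStack]
  have hlx : l < x := by
    have htop : (x :: l :: S).Pairwise (· > ·) :=
      (hsorted y).pairwise.sublist (havail ▸ List.sublist_append_right _ _)
    exact List.rel_of_pairwise_cons htop List.mem_cons_self
  refine ⟨(l, y), (x, y'), l, y, x, y', rfl, rfl, hlx, hlt, ?_, ?_, ?_, ?_, ?_, ?_, ?_, ?_⟩
  · exact ⟨hlt.le.trans hy', top_mem_flushRow hl⟩
  · exact ⟨hy', (top_mem_flushRow_iff hnodup hlt hret.lt_between hl).2 hret.le⟩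
  · exact ⟨hlt.le.trans hy', hrow ▸ List.mem_append_left _ (top_mem_flushRow hx)⟩
  · exact fun b hyb hby' h =>
      ((top_mem_flushRow_iff hnodup hyb (fun c hyc hcb => hret.lt_between c hyc (hcb.trans hby'))
        hl).1 h.2).not_gt (hret.lt_between b hyb hby')
  · intro c hlc hcx hc
    refine notMem_append_of_sortedGT (havail ▸ hsorted y) hlc hcx ?_
    rw [← havail, flushAvail_congr hstack]
    exact List.take_subset _ _ hc.2
  · intro c hlc hcx hc
    refine notMem_append_of_sortedGT (hl ▸ hB' ▸ hsorted y') hlc hcx ?_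
    have := List.take_subset _ _ hc.2
    rw [hB, hl] at this
    exact ((List.sublist_cons_self x _).append_left B).subset this
  · intro b hyb hby' hxb
    exact notMem_flushRow_between_of_movesUnit hnodup hret hmove hx hyb hby' hxb.2
  · exact flushPoints_eq_of_movesUnit hnodup hret hmove hy' hl (hl ▸ hx)

theorem card_toFinset_flushRow (hnew : ∀ y, (flushStack new 0 y).Nodup) {y : ℕ}
    (ha : a y < (flushAvail new a y).length) : (flushRow new a y).toFinset.card = a y + 1 := by
  rw [List.toFinset_card_of_nodup (nodup_flushRow hnew a y), length_flushRow ha]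

theorem isFirstReturn_of_top_mem_flushRow (hnew : ∀ y, (flushStack new 0 y).Nodup) {y y' l : ℕ}
    {S : List ℕ} (hyy' : y < y') (hl : flushStack new a (y + 1) = l :: S)
    (hly' : l ∈ flushRow new a y') (hbetween : ∀ b, y < b → b < y' → l ∉ flushRow new a b) :
    IsFirstReturn (flushHeight new a) y y' := by
  have hlt : ∀ b, y < b → b < y' → flushHeight new a y < flushHeight new a b :=
    lt_of_forall_not_isFirstReturn fun b hby' hret =>
      hbetween b hret.lt hby' ((top_mem_flushRow_iff hnew hret.lt hret.lt_between hl).2 hret.le)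
  exact ⟨hyy', (top_mem_flushRow_iff hnew hyy' hlt hl).1 hly', hlt⟩

theorem movesUnit_of_flushPoints_eq (hnew : ∀ y, (flushStack new 0 y).Nodup)
    (ha : ∀ y, a y < (flushAvail new a y).length) (ha' : ∀ y, a' y < (flushAvail new a' y).length)
    (hn : ∀ k > n, a' k = a k) {x y x'' y' : ℕ} (hyy' : y ≠ y')
    (hxy : (x, y) ∈ flushPoints n new a) (hxy' : (x'', y') ∉ flushPoints n new a) (hy' : y' ≤ n)
    (heq : flushPoints n new a' = flushPoints n new a \ {(x, y)} ∪ {(x'', y')}) :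
    MovesUnit a a' y y' := by
  have hmem : ∀ k ≤ n, ∀ z, z ∈ flushRow new a' k ↔
      (z ∈ flushRow new a k ∧ ¬(z = x ∧ k = y)) ∨ (z = x'' ∧ k = y') := fun k hk z => by
    simpa [flushPoints, hk, or_comm] using Set.ext_iff.1 heq (z, k)
  have hcard := fun k => card_toFinset_flushRow hnew (ha k)
  have hcard' := fun k => card_toFinset_flushRow hnew (ha' k)
  refine .intro hyy' ?_ ?_ fun k hky hky' => ?_
  · have hrow : (flushRow new a' y).toFinset = (flushRow new a y).toFinset.erase x := by
      ext z; simp [hmem y hxy.1, hyy', and_comm]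
    have hx : x ∈ flushRow new a y := hxy.2
    have := Finset.card_erase_add_one (List.mem_toFinset.2 hx)
    rw [← hrow, hcard, hcard'] at this
    omega
  · have hrow : (flushRow new a' y').toFinset = insert x'' (flushRow new a y').toFinset := by
      ext z; simp [hmem y' hy', hyy'.symm, or_comm]
    have hx'' : x'' ∉ flushRow new a y' := fun h => hxy' ⟨hy', h⟩
    have := Finset.card_insert_of_notMem (mt List.mem_toFinset.1 hx'')
    rw [← hrow, hcard, hcard'] at this
    omega
  · rcases lt_or_ge n k with hk | hk
    · exact hn k hk
    have hrow : (flushRow new a' k).toFinset = (flushRow new a k).toFinset := by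
      ext z; simp [hmem k hk, hky, hky']
    have := hcard k
    rw [← hrow, hcard'] at this
    omega

theorem exists_isFirstReturn_of_isRightRotation (hnew : ∀ y, (flushStack new 0 y).Nodup)
    (ha : ∀ y, a y < (flushAvail new a y).length) (ha' : ∀ y, a' y < (flushAvail new a' y).length)
    (hn : ∀ k > n, a' k = a k)
    (h : IsRightRotation (flushPoints n new a) (flushPoints n new a')) :
    ∃ y y', IsFirstReturn (flushHeight new a) y y' ∧ MovesUnit a a' y y' := by
  obtain ⟨-, -, x, y, x'', y', -, -, hxx'', hyy', hxy, hxy', hx''y, hbetween, -, -, -, heq⟩ := h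
  obtain ⟨l, S, hl⟩ := exists_flushStack_succ_eq_cons (ha y)
  have only_top : ∀ z, z ∈ flushRow new a y → z ∈ flushRow new a y' → z = l := fun z =>
    eq_top_of_mem_flushRow_of_mem_flushRow hnew hyy' hl
  obtain rfl : x = l := only_top x hxy.2 hxy'.2
  refine ⟨y, y', isFirstReturn_of_top_mem_flushRow hnew hyy' hl hxy'.2 fun b hyb hby' hb =>
    hbetween b hyb hby' ⟨hby'.le.trans hxy'.1, hb⟩, ?_⟩
  exact movesUnit_of_flushPoints_eq hnew ha ha' hn hyy'.ne hxy
    (fun h => hxx''.ne' (only_top x'' hx''y.2 h.2)) hxy'.1 heq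

theorem isRightRotation_flushPoints_iff (hnew : ∀ y, (flushStack new 0 y).SortedGT)
    (ha : ∀ y, a y < (flushAvail new a y).length) (ha' : ∀ y, a' y < (flushAvail new a' y).length)
    (hn : ∀ k > n, a' k = a k) :
    IsRightRotation (flushPoints n new a) (flushPoints n new a') ↔
      ∃ y y', IsFirstReturn (flushHeight new a) y y' ∧ MovesUnit a a' y y' := by
  refine ⟨exists_isFirstReturn_of_isRightRotation (fun y => (hnew y).nodup) ha ha' hn, ?_⟩
  rintro ⟨y, y', hret, hmove⟩
  refine isRightRotation_flushPoints_of_movesUnit hnew ha hret hmove ?_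
  by_contra! hlt
  have := hmove.target hret.lt.ne
  rw [hn y' hlt] at this
  omega

end FlushPoints

/-! ### Lattice paths row by row -/

/-- The number of east steps of a path at height `k`. -/
def eastRow : List Bool → ℕ → ℕ
  | [], _ => 0
  | false :: rest, k => eastRow rest k + (Pi.single 0 1 : ℕ → ℕ) k
  | true :: _, 0 => 0
  | true :: rest, k + 1 => eastRow rest k

/-- The abscissa at which a path first reaches height `k`, and the abscissa of its endpoint if it
ends below height `k`. -/
def abscissaAt (μ : List Bool) (k : ℕ) : ℕ := ∑ j ∈ Finset.range k, eastRow μ j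

theorem eastRow_cons_false (μ : List Bool) : eastRow (false :: μ) = eastRow μ + Pi.single 0 1 := by
  ext k
  rfl

theorem eastRow_append_cons_false (μ₁ μ₂ : List Bool) :
    eastRow (μ₁ ++ false :: μ₂) = eastRow (μ₁ ++ μ₂) + Pi.single (northSteps μ₁) 1 := by
  induction μ₁ with
  | nil => exact eastRow_cons_false μ₂
  | cons s μ₁ ih =>
    cases s with
    | false =>
      simp only [List.cons_append, eastRow_cons_false, ih, northSteps, List.count_cons_of_ne,
        ne_eq, Bool.false_eq_true, not_false_eq_true]
      exact add_right_comm _ _ _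
    | true =>
      ext k
      cases k with
      | zero => simp [eastRow, northSteps]
      | succ k => simp [eastRow, ih, northSteps, Pi.single_apply]

theorem eq_of_eastRow_eq {μ μ' : List Bool} (hn : northSteps μ = northSteps μ')
    (h : eastRow μ = eastRow μ') : μ = μ' := by
  induction μ generalizing μ' with
  | nil =>
    match μ' with
    | [] => rfl
    | false :: _ => simpa [eastRow] using congrFun h 0
    | true :: _ => simp [northSteps] at hn
  | cons s μ ih =>
    match s, μ' with
    | true, [] => simp [northSteps] at hn
    | false, [] => simpa [eastRow] using congrFun h 0
    | true, true :: μ' =>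
      rw [ih (by simpa [northSteps] using hn) (funext fun k => congrFun h (k + 1))]
    | false, false :: μ' =>
      rw [eastRow_cons_false, eastRow_cons_false] at h
      rw [ih (by simpa [northSteps] using hn) (add_right_cancel h)]
    | true, false :: _ => simpa [eastRow] using congrFun h 0
    | false, true :: _ => simpa [eastRow] using congrFun h 0

theorem eastRow_eq_zero {μ : List Bool} {k : ℕ} (hk : northSteps μ < k) : eastRow μ k = 0 := by
  induction μ generalizing k with
  | nil => rfl
  | cons s μ ih =>
    match s, k with
    | false, k =>
      have hk0 : k ≠ 0 := by omega
      simp [eastRow, hk0, ih (by simpa [northSteps] using hk)]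
    | true, 0 => rfl
    | true, k + 1 => exact ih (by simpa [northSteps] using hk)

theorem pointsAtHeight_eq {μ : List Bool} {k : ℕ} (hk : k ≤ northSteps μ) :
    pointsAtHeight μ k = eastRow μ k + 1 := by
  induction μ generalizing k with
  | nil =>
    obtain rfl : k = 0 := by simpa [northSteps] using hk
    simp [pointsAtHeight, eastRow]
  | cons s μ ih =>
    unfold pointsAtHeight at ih ⊢
    rw [List.length_cons, List.range_succ_eq_map, List.filter_cons, List.filter_map,
      apply_ite List.length, List.length_cons, List.length_map]
    match s, k with
    | false, 0 => simpa [eastRow, Function.comp_def, northSteps] using ih (Nat.zero_le _)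
    | false, k + 1 =>
      simpa [eastRow, Function.comp_def, northSteps] using ih (by simpa [northSteps] using hk)
    | true, 0 => simp [eastRow, Function.comp_def]
    | true, k + 1 =>
      simpa [eastRow, Function.comp_def, northSteps] using ih (by simpa [northSteps] using hk)

theorem abscissaAt_zero (μ : List Bool) : abscissaAt μ 0 = 0 := rfl

theorem abscissaAt_succ (μ : List Bool) (k : ℕ) :
    abscissaAt μ (k + 1) = abscissaAt μ k + eastRow μ k :=
  Finset.sum_range_succ _ _

theorem abscissaAt_nil (k : ℕ) : abscissaAt [] k = 0 := by
  simp [abscissaAt, eastRow]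

theorem abscissaAt_cons_false (μ : List Bool) (k : ℕ) :
    abscissaAt (false :: μ) (k + 1) = abscissaAt μ (k + 1) + 1 := by
  simp [abscissaAt, eastRow, Finset.sum_add_distrib]

theorem abscissaAt_cons_true (μ : List Bool) (k : ℕ) :
    abscissaAt (true :: μ) (k + 1) = abscissaAt μ k := by
  simp [abscissaAt, eastRow, Finset.sum_range_succ']

theorem abscissaAt_mono (μ : List Bool) : Monotone (abscissaAt μ) :=
  monotone_nat_of_le_succ fun k => abscissaAt_succ μ k ▸ Nat.le_add_right _ _

theorem abscissaAt_eq_eastSteps {μ : List Bool} {k : ℕ} (hk : northSteps μ < k) :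
    abscissaAt μ k = eastSteps μ := by
  obtain ⟨k, rfl⟩ := Nat.exists_eq_succ_of_ne_zero (Nat.ne_zero_of_lt hk)
  induction μ generalizing k with
  | nil => exact abscissaAt_nil _
  | cons s μ ih =>
    match s, k with
    | false, k =>
      rw [abscissaAt_cons_false, ih k (by simpa [northSteps] using hk)]
      simp [eastSteps]
    | true, 0 => simp [northSteps] at hk
    | true, k + 1 =>
      rw [abscissaAt_cons_true, ih k (by simpa [northSteps] using hk)]
      simp [eastSteps]

theorem abscissaAt_le_eastSteps (μ : List Bool) (k : ℕ) : abscissaAt μ k ≤ eastSteps μ :=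
  (abscissaAt_mono μ (Nat.le_add_left k (northSteps μ + 1))).trans_eq
    (abscissaAt_eq_eastSteps (by omega))

theorem heightAt_le_iff {ν : List Bool} {x y : ℕ} (hx : x ≤ eastSteps ν) :
    heightAt ν x ≤ y ↔ x ≤ abscissaAt ν (y + 1) := by
  induction ν generalizing x y with
  | nil =>
    obtain rfl : x = 0 := by simpa [eastSteps] using hx
    simp [heightAt]
  | cons s ν ih =>
    match s, x, y with
    | _, 0, _ => simp [heightAt]
    | false, x + 1, y =>
      rw [heightAt, abscissaAt_cons_false, ih (by simpa [eastSteps] using hx)]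
      omega
    | true, x + 1, 0 => simp [heightAt, abscissaAt_cons_true, abscissaAt_zero]
    | true, x + 1, y + 1 =>
      rw [heightAt, abscissaAt_cons_true, ← ih (by simpa [eastSteps] using hx)]
      omega

theorem mem_APts_iff {ν : List Bool} {p : ℕ × ℕ} :
    p ∈ APts ν ↔ p.1 ≤ abscissaAt ν (p.2 + 1) ∧ p.2 ≤ northSteps ν := by
  rw [APts, Set.mem_ofPred_eq]
  constructor
  · exact fun ⟨h₁, h₂, h₃⟩ => ⟨(heightAt_le_iff h₁).1 h₂, h₃⟩
  · intro ⟨h₁, h₂⟩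
    have hx := h₁.trans (abscissaAt_le_eastSteps ν _)
    exact ⟨hx, (heightAt_le_iff hx).2 h₁, h₂⟩

theorem horiz_eq {ν : List Bool} {p : ℕ × ℕ} (hp : p ∈ APts ν) :
    horiz ν p = abscissaAt ν (p.2 + 1) - p.1 := by
  rw [mem_APts_iff] at hp
  refine IsGreatest.csSup_eq ⟨?_, fun k hk => ?_⟩
  · rw [Set.mem_ofPred_eq, mem_APts_iff]
    exact ⟨by dsimp only; omega, hp.2⟩
  · rw [Set.mem_ofPred_eq, mem_APts_iff] at hk
    exact Nat.le_sub_of_add_le' hk.1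

theorem pointAt_cons_false (μ : List Bool) (i : ℕ) :
    pointAt (false :: μ) (i + 1) = ((pointAt μ i).1 + 1, (pointAt μ i).2) := by
  simp [pointAt]

theorem pointAt_cons_true (μ : List Bool) (i : ℕ) :
    pointAt (true :: μ) (i + 1) = ((pointAt μ i).1, (pointAt μ i).2 + 1) := by
  simp [pointAt]

theorem pointAt_fst_add_snd {μ : List Bool} {i : ℕ} (hi : i ≤ μ.length) :
    (pointAt μ i).1 + (pointAt μ i).2 = i := by
  rw [pointAt, List.count_false_add_count_true, List.length_take_of_le hi]

theorem pointAt_mono (μ : List Bool) : Monotone (pointAt μ) := fun _ _ h =>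
  have hsub := (List.take_prefix_take_left h).sublist
  ⟨hsub.count_le _, hsub.count_le _⟩

theorem pointAt_snd_mono (μ : List Bool) : Monotone fun i => (pointAt μ i).2 :=
  fun _ _ h => (pointAt_mono μ h).2

theorem eq_of_pointAt_eq {μ : List Bool} {i j : ℕ} (hi : i ≤ μ.length) (hj : j ≤ μ.length)
    (h : pointAt μ i = pointAt μ j) : i = j := by
  rw [← pointAt_fst_add_snd hi, h, pointAt_fst_add_snd hj]

theorem pointAt_fst_le_abscissaAt (μ : List Bool) (i : ℕ) :
    (pointAt μ i).1 ≤ abscissaAt μ ((pointAt μ i).2 + 1) := by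
  induction μ generalizing i with
  | nil => simp [pointAt]
  | cons s μ ih =>
    match s, i with
    | _, 0 => simp [pointAt]
    | false, i + 1 => simpa [pointAt_cons_false, abscissaAt_cons_false] using ih i
    | true, i + 1 => simpa [pointAt_cons_true, abscissaAt_cons_true] using ih i

theorem exists_pointAt_eq {μ : List Bool} {x k : ℕ} (hk : k ≤ northSteps μ)
    (hkx : abscissaAt μ k ≤ x) (hxk : x ≤ abscissaAt μ (k + 1)) :
    ∃ i ≤ μ.length, pointAt μ i = (x, k) := by
  induction μ generalizing x k with
  | nil =>
    obtain rfl : k = 0 := by simpa [northSteps] using hk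
    obtain rfl : x = 0 := by simpa [abscissaAt_nil] using hxk
    exact ⟨0, le_rfl, rfl⟩
  | cons s μ ih =>
    match s, x, k with
    | _, 0, 0 => exact ⟨0, Nat.zero_le _, rfl⟩
    | false, 0, k + 1 => simp [abscissaAt_cons_false] at hkx
    | false, x + 1, k =>
      have hkx' : abscissaAt μ k ≤ x := by
        cases k with
        | zero => exact Nat.zero_le _
        | succ k => simpa [abscissaAt_cons_false] using hkx
      obtain ⟨i, hi, hp⟩ := ih (by simpa [northSteps] using hk) hkx'
        (by simpa [abscissaAt_cons_false] using hxk)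
      exact ⟨i + 1, by simpa using hi, by rw [pointAt_cons_false, hp]⟩
    | true, x + 1, 0 => simp [abscissaAt_cons_true, abscissaAt_zero] at hxk
    | true, x, k + 1 =>
      rw [abscissaAt_cons_true] at hkx hxk
      obtain ⟨i, hi, hp⟩ := ih (by simpa [northSteps] using hk) hkx hxk
      exact ⟨i + 1, by simpa using hi, by rw [pointAt_cons_true, hp]⟩

theorem getElem_eq_false_iff {μ : List Bool} {i : ℕ} (hi : i < μ.length) :
    μ[i] = false ↔ (pointAt μ i).1 < abscissaAt μ ((pointAt μ i).2 + 1) := by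
  induction μ generalizing i with
  | nil => simp at hi
  | cons s μ ih =>
    match s, i with
    | false, 0 => simp [pointAt, abscissaAt_cons_false]
    | true, 0 => simp [pointAt, abscissaAt_cons_true, abscissaAt_zero]
    | false, i + 1 =>
      simpa [pointAt_cons_false, abscissaAt_cons_false] using ih (by simpa using hi)
    | true, i + 1 =>
      simpa [pointAt_cons_true, abscissaAt_cons_true] using ih (by simpa using hi)

/-! ### Covers of the ν-Tamari lattice -/

section NuPath

variable {ν μ μ' : List Bool}

/-- The horizontal distance from the last lattice point of `μ` at height `y` to the right end of
row `y` of `A_ν`; a truncated subtraction, exact for `ν`-paths by `abscissaAt_le_of_isNuPath`. -/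
def slack (ν μ : List Bool) (y : ℕ) : ℕ := abscissaAt ν (y + 1) - abscissaAt μ (y + 1)

theorem abscissaAt_le_of_isNuPath (hμ : IsNuPath ν μ) (k : ℕ) :
    abscissaAt μ k ≤ abscissaAt ν k := by
  cases k with
  | zero => exact le_rfl
  | succ y =>
    rcases le_or_gt y (northSteps μ) with hy | hy
    · obtain ⟨i, hi, hp⟩ := exists_pointAt_eq hy (abscissaAt_mono μ y.le_succ) le_rfl
      exact (mem_APts_iff.1 (hp ▸ hμ.2.2 i hi)).1
    · rw [abscissaAt_eq_eastSteps (by omega), abscissaAt_eq_eastSteps (by have := hμ.2.1; omega),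
        hμ.1]

theorem horiz_pointAt_of_isNuPath (hμ : IsNuPath ν μ) {i : ℕ} (hi : i ≤ μ.length) :
    horiz ν (pointAt μ i) + (pointAt μ i).1 = abscissaAt ν ((pointAt μ i).2 + 1) := by
  rw [horiz_eq (hμ.2.2 i hi), Nat.sub_add_cancel (mem_APts_iff.1 (hμ.2.2 i hi)).1]

theorem slack_le_horiz (hμ : IsNuPath ν μ) {i : ℕ} (hi : i ≤ μ.length) :
    slack ν μ (pointAt μ i).2 ≤ horiz ν (pointAt μ i) := by
  rw [horiz_eq (hμ.2.2 i hi)]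
  exact Nat.sub_le_sub_left (pointAt_fst_le_abscissaAt μ i) _

/-- At a first return the horizontal distance passes through its old value: along `μ` it drops by
at most one per step, because a north step never decreases it. -/
theorem exists_horiz_eq_slack_of_isFirstReturn (hμ : IsNuPath ν μ) {y y' : ℕ}
    (hret : IsFirstReturn (slack ν μ) y y') (hy' : y' ≤ northSteps μ) :
    ∃ i ≤ μ.length, (pointAt μ i).2 = y' ∧ horiz ν (pointAt μ i) = slack ν μ y := by
  obtain ⟨b, rfl⟩ := Nat.exists_eq_add_one.2 (Nat.zero_lt_of_lt hret.lt)
  have hle : slack ν μ (b + 1) ≤ slack ν μ y := hret.le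
  have hge : slack ν μ y ≤ slack ν μ b := by
    rcases (Nat.lt_succ_iff.1 hret.lt).eq_or_lt with rfl | hlt
    · exact le_rfl
    · exact (hret.lt_between b hlt b.lt_succ_self).le
  have hmono := abscissaAt_mono ν (Nat.le_add_right (b + 1) 1)
  have hcap := abscissaAt_le_of_isNuPath hμ
  have hcapb := hcap (b + 1)
  have hcapb' := hcap (b + 1 + 1)
  have hslack : slack ν μ b + abscissaAt μ (b + 1) = abscissaAt ν (b + 1) :=
    Nat.sub_add_cancel hcapb
  have hslack' : slack ν μ (b + 1) + abscissaAt μ (b + 1 + 1) = abscissaAt ν (b + 1 + 1) :=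
    Nat.sub_add_cancel hcapb'
  obtain ⟨i, hi, hp⟩ := exists_pointAt_eq (x := abscissaAt ν (b + 1 + 1) - slack ν μ y) hy'
    (by omega) (by omega)
  refine ⟨i, hi, congrArg Prod.snd hp, ?_⟩
  have hhoriz := horiz_pointAt_of_isNuPath hμ hi
  rw [hp] at hhoriz ⊢
  dsimp only at hhoriz
  omega

/-- The conditions of a cover of `μ` in the `ν`-Tamari lattice: `μ` has a valley after `i` steps,
and after `j` steps it reaches the next point with the same horizontal distance. -/
structure IsValleyReturn (ν μ : List Bool) (i j : ℕ) : Prop where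
  pos : 0 < i
  lt : i < j
  le_length : j ≤ μ.length
  east : μ.getD (i - 1) true = false
  north : μ.getD i false = true
  horiz_eq : horiz ν (pointAt μ j) = horiz ν (pointAt μ i)
  horiz_ne : ∀ k, i < k → k < j → horiz ν (pointAt μ k) ≠ horiz ν (pointAt μ i)

/-- The path obtained from `μ` by exchanging its `i`-th step, meant to be an east step, with the
subpath from its `i`-th to its `j`-th point. -/
def swapEast (μ : List Bool) (i j : ℕ) : List Bool :=
  μ.take (i - 1) ++ (μ.drop i).take (j - i) ++ [false] ++ μ.drop j

theorem tamariCover_iff_exists_swapEast (hμ : IsNuPath ν μ) (hμ' : IsNuPath ν μ') :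
    TamariCover ν μ μ' ↔ ∃ i j, IsValleyReturn ν μ i j ∧ μ' = swapEast μ i j := by
  constructor
  · rintro ⟨-, -, i, j, hi, hij, hj, heast, hnorth, heq, hne, hμ'⟩
    exact ⟨i, j, ⟨hi, hij, hj, heast, hnorth, heq, hne⟩, hμ'⟩
  · rintro ⟨i, j, ⟨hi, hij, hj, heast, hnorth, heq, hne⟩, h⟩
    exact ⟨hμ, hμ', i, j, hi, hij, hj, heast, hnorth, heq, hne, h⟩

namespace IsValleyReturn

variable {i j : ℕ}

theorem pointAt_fst (h : IsValleyReturn ν μ i j) :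
    (pointAt μ i).1 = abscissaAt μ ((pointAt μ i).2 + 1) := by
  have hi : i < μ.length := h.lt.trans_le h.le_length
  have hnorth := h.north
  rw [List.getD_eq_getElem _ _ hi, ← Bool.not_eq_false, getElem_eq_false_iff hi] at hnorth
  exact (pointAt_fst_le_abscissaAt μ i).antisymm (not_lt.1 hnorth)

theorem horiz_eq_slack (h : IsValleyReturn ν μ i j) (hμ : IsNuPath ν μ) :
    horiz ν (pointAt μ i) = slack ν μ (pointAt μ i).2 := by
  rw [_root_.horiz_eq (hμ.2.2 i (h.lt.le.trans h.le_length)), slack, h.pointAt_fst]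

theorem pointAt_snd_lt (h : IsValleyReturn ν μ i j) : (pointAt μ i).2 < (pointAt μ j).2 := by
  have hi : i < μ.length := h.lt.trans_le h.le_length
  have hnorth := h.north
  rw [List.getD_eq_getElem _ _ hi] at hnorth
  have hsucc : (pointAt μ (i + 1)).2 = (pointAt μ i).2 + 1 := by
    simp [pointAt, List.take_succ_eq_append_getElem hi, hnorth]
  exact Nat.lt_of_succ_le (hsucc.symm.trans_le (pointAt_mono μ h.lt).2)

theorem isFirstReturn (h : IsValleyReturn ν μ i j) (hμ : IsNuPath ν μ) :
    IsFirstReturn (slack ν μ) (pointAt μ i).2 (pointAt μ j).2 := by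
  have hslack := h.horiz_eq_slack hμ
  refine ⟨h.pointAt_snd_lt, ?_, lt_of_forall_not_isFirstReturn fun b hb hret => ?_⟩
  · exact (slack_le_horiz hμ h.le_length).trans_eq (h.horiz_eq.trans hslack)
  · have hbn : b ≤ northSteps μ := by
      have := (mem_APts_iff.1 (hμ.2.2 j h.le_length)).2
      have := hμ.2.1
      omega
    obtain ⟨k, -, hk, hhoriz⟩ := exists_horiz_eq_slack_of_isFirstReturn hμ hret hbn
    exact h.horiz_ne k ((pointAt_snd_mono μ).reflect_lt (hret.lt.trans_eq hk.symm))
      ((pointAt_snd_mono μ).reflect_lt (hk.trans_lt hb)) (hhoriz.trans hslack.symm)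

theorem exists_eq_append (h : IsValleyReturn ν μ i j) :
    ∃ A C D, μ = A ++ false :: (C ++ D) ∧ swapEast μ i j = A ++ C ++ false :: D ∧
      northSteps A = (pointAt μ i).2 ∧ northSteps (A ++ C) = (pointAt μ j).2 := by
  obtain ⟨i, rfl⟩ := Nat.exists_eq_add_one.2 h.pos
  have hi : i < μ.length := by
    have := h.lt
    have := h.le_length
    omega
  have heast : μ[i] = false := (List.getD_eq_getElem _ true hi).symm.trans h.east
  have htake : μ.take (i + 1) = μ.take i ++ [false] := by
    rw [List.take_succ_eq_append_getElem hi, heast]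
  have htake' : μ.take j = μ.take i ++ [false] ++ (μ.drop (i + 1)).take (j - (i + 1)) := by
    rw [← htake, ← List.take_add, Nat.add_sub_cancel' h.lt.le]
  refine ⟨μ.take i, (μ.drop (i + 1)).take (j - (i + 1)), μ.drop j, ?_, ?_, ?_, ?_⟩
  · conv_lhs => rw [← List.take_append_drop j μ, htake']
    simp
  · simp [swapEast]
  · simp [pointAt, htake, northSteps]
  · simp [pointAt, htake', northSteps]

theorem northSteps_swapEast (h : IsValleyReturn ν μ i j) :
    northSteps (swapEast μ i j) = northSteps μ := by
  obtain ⟨A, C, D, hμ, hswap, -, -⟩ := h.exists_eq_append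
  rw [hswap, hμ]
  simp [northSteps]

theorem movesUnit_swapEast (h : IsValleyReturn ν μ i j) :
    MovesUnit (eastRow μ) (eastRow (swapEast μ i j)) (pointAt μ i).2 (pointAt μ j).2 := by
  obtain ⟨A, C, D, hμ, hswap, hA, hAC⟩ := h.exists_eq_append
  rw [hswap, ← hA, ← hAC, hμ, MovesUnit, eastRow_append_cons_false, eastRow_append_cons_false,
    List.append_assoc, add_right_comm]

end IsValleyReturn

theorem exists_valley_of_eastRow_pos {y : ℕ} (hy : 0 < eastRow μ y) (hyn : y < northSteps μ) :
    ∃ i, 0 < i ∧ i ≤ μ.length ∧ pointAt μ i = (abscissaAt μ (y + 1), y) ∧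
      μ.getD (i - 1) true = false ∧ μ.getD i false = true := by
  have hsucc := abscissaAt_succ μ y
  obtain ⟨i, hi, hp⟩ := exists_pointAt_eq (x := abscissaAt μ (y + 1)) hyn.le (by omega) le_rfl
  obtain ⟨k, hk, hpk⟩ := exists_pointAt_eq (x := abscissaAt μ (y + 1) - 1) hyn.le (by omega)
    (by omega)
  have hsum := pointAt_fst_add_snd hi
  have hsumk := pointAt_fst_add_snd hk
  rw [hp] at hsum
  rw [hpk] at hsumk
  dsimp only at hsum hsumk
  obtain rfl : i = k + 1 := by omega
  refine ⟨k + 1, k.succ_pos, hi, hp, ?_, ?_⟩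
  · rw [Nat.add_sub_cancel, List.getD_eq_getElem _ _ hi, getElem_eq_false_iff, hpk]
    dsimp only
    omega
  · have hlt : k + 1 < μ.length := by
      refine hi.lt_of_ne fun hlen => hyn.ne ?_
      simpa [pointAt, hlen, northSteps] using (congrArg Prod.snd hp).symm
    rw [List.getD_eq_getElem _ _ hlt, ← Bool.not_eq_false, getElem_eq_false_iff, hp]
    exact lt_irrefl _

theorem horiz_ne_of_isFirstReturn (hμ : IsNuPath ν μ) {i j k : ℕ} (hik : i < k) (hkj : k < j)
    (hj : j ≤ μ.length) (hret : IsFirstReturn (slack ν μ) (pointAt μ i).2 (pointAt μ j).2)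
    (hi : (pointAt μ i).1 = abscissaAt μ ((pointAt μ i).2 + 1))
    (heq : horiz ν (pointAt μ j) = horiz ν (pointAt μ i)) :
    horiz ν (pointAt μ k) ≠ horiz ν (pointAt μ i) := by
  have hk := hkj.le.trans hj
  have hslack : horiz ν (pointAt μ i) = slack ν μ (pointAt μ i).2 := by
    rw [horiz_eq (hμ.2.2 i (hik.le.trans hk)), slack, hi]
  intro hhoriz
  have hmono := pointAt_mono μ hik.le
  have hmono' := pointAt_mono μ hkj.le
  rcases hmono.2.eq_or_lt with hsnd | hlt
  · refine hik.ne (eq_of_pointAt_eq (hik.le.trans hk) hk (Prod.ext ?_ hsnd))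
    exact hmono.1.antisymm ((pointAt_fst_le_abscissaAt μ k).trans_eq (by rw [hi, hsnd]))
  rcases hmono'.2.eq_or_lt with hsnd | hlt'
  · refine hkj.ne (eq_of_pointAt_eq hk hj (Prod.ext ?_ hsnd))
    have := horiz_pointAt_of_isNuPath hμ hk
    have := horiz_pointAt_of_isNuPath hμ hj
    rw [hsnd] at *
    omega
  · exact ((hret.lt_between _ hlt hlt').trans_le (slack_le_horiz hμ hk)).ne' (hhoriz.trans hslack)

theorem exists_isValleyReturn (hμ : IsNuPath ν μ) {y y' : ℕ}
    (hret : IsFirstReturn (slack ν μ) y y') (hy : 0 < eastRow μ y) (hy' : y' ≤ northSteps μ) :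
    ∃ i j, IsValleyReturn ν μ i j ∧ (pointAt μ i).2 = y ∧ (pointAt μ j).2 = y' := by
  obtain ⟨i, hpos, hi, hp, heast, hnorth⟩ := exists_valley_of_eastRow_pos hy (hret.lt.trans_le hy')
  obtain ⟨j, hj, rfl, hhoriz⟩ := exists_horiz_eq_slack_of_isFirstReturn hμ hret hy'
  obtain rfl : (pointAt μ i).2 = y := congrArg Prod.snd hp
  have hfst : (pointAt μ i).1 = abscissaAt μ ((pointAt μ i).2 + 1) := congrArg Prod.fst hp
  have hslack : horiz ν (pointAt μ j) = horiz ν (pointAt μ i) := by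
    rw [hhoriz, horiz_eq (hμ.2.2 i hi), slack, hfst]
  have hij : i < j := (pointAt_snd_mono μ).reflect_lt hret.lt
  refine ⟨i, j, ⟨hpos, hij, hj, heast, hnorth, hslack, ?_⟩, rfl, rfl⟩
  exact fun k hik hkj => horiz_ne_of_isFirstReturn hμ hik hkj hj hret hfst hslack

theorem tamariCover_iff (hμ : IsNuPath ν μ) (hμ' : IsNuPath ν μ') :
    TamariCover ν μ μ' ↔
      ∃ y y', IsFirstReturn (slack ν μ) y y' ∧ MovesUnit (eastRow μ) (eastRow μ') y y' := by
  rw [tamariCover_iff_exists_swapEast hμ hμ']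
  have hn : northSteps μ' = northSteps μ := hμ'.2.1.trans hμ.2.1.symm
  constructor
  · rintro ⟨i, j, h, rfl⟩
    exact ⟨_, _, h.isFirstReturn hμ, h.movesUnit_swapEast⟩
  · rintro ⟨y, y', hret, hmove⟩
    have hy : 0 < eastRow μ y := hmove.source hret.lt.ne ▸ Nat.succ_pos _
    have hy' : y' ≤ northSteps μ := by
      by_contra! hlt
      have := hmove.target hret.lt.ne
      rw [eastRow_eq_zero (hn.trans_lt hlt)] at this
      omega
    obtain ⟨i, j, h, rfl, rfl⟩ := exists_isValleyReturn hμ hret hy hy'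
    refine ⟨i, j, h, eq_of_eastRow_eq (hn.trans h.northSteps_swapEast.symm) ?_⟩
    exact add_right_cancel (hmove.trans h.movesUnit_swapEast.symm)

end NuPath

/-! ### Right-flushing of ν-paths -/

section Rflush

variable {ν μ : List Bool}

/-- The columns of `A_ν` that first occur in row `y`, rightmost first. -/
def newCols (ν : List Bool) : ℕ → List ℕ
  | 0 => (List.range (eastRow ν 0 + 1)).reverse
  | y + 1 => (List.range' (abscissaAt ν (y + 1) + 1) (eastRow ν (y + 1))).reverse

theorem flushStack_newCols_zero_succ (ν : List Bool) (y : ℕ) :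
    flushStack (newCols ν) 0 (y + 1) = (List.range (abscissaAt ν (y + 1) + 1)).reverse := by
  induction y with
  | zero => simp [flushStack, newCols, abscissaAt_succ, abscissaAt_zero]
  | succ y ih =>
    have hrange := List.range'_append_1 (s := 0) (m := abscissaAt ν (y + 1) + 1)
      (n := eastRow ν (y + 1))
    rw [← List.range_eq_range', ← List.range_eq_range', Nat.zero_add] at hrange
    rw [flushStack, ih, newCols, ← List.reverse_append, hrange, abscissaAt_succ ν (y + 1),
      Nat.add_right_comm]
    rfl

theorem sortedGT_flushStack_newCols (ν : List Bool) (y : ℕ) :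
    (flushStack (newCols ν) 0 y).SortedGT := by
  cases y with
  | zero => exact List.Pairwise.nil.sortedGT
  | succ y =>
    rw [flushStack_newCols_zero_succ]
    exact List.sortedLT_range _ |>.reverse

theorem rowAvail_eq_flushStack (ν : List Bool) (y : ℕ) :
    rowAvail ν y = flushStack (newCols ν) 0 (y + 1) := by
  refine List.SortedGT.eq_of_mem_iff ?_ (sortedGT_flushStack_newCols ν (y + 1)) fun x => ?_
  · exact (List.pairwise_lt_range.filter _).sortedLT.reverse
  · have hle := abscissaAt_le_eastSteps ν (y + 1)
    rw [flushStack_newCols_zero_succ, rowAvail]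
    simp only [List.mem_reverse, List.mem_filter, List.mem_range, decide_eq_true_eq,
      Nat.lt_succ_iff]
    exact ⟨fun ⟨hx, h⟩ => (heightAt_le_iff hx).1 h,
      fun h => ⟨h.trans hle, (heightAt_le_iff (h.trans hle)).2 h⟩⟩

theorem length_flushAvail_newCols (hμ : IsNuPath ν μ) (y : ℕ) :
    (flushAvail (newCols ν) (eastRow μ) y).length + abscissaAt μ y = abscissaAt ν (y + 1) + 1 := by
  induction y with
  | zero => simp [flushAvail, flushStack, newCols, abscissaAt_succ, abscissaAt_zero]
  | succ y ih =>
    have hcap := abscissaAt_le_of_isNuPath hμ (y + 1)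
    rw [abscissaAt_succ] at hcap
    rw [flushAvail, newCols, List.length_append, List.length_reverse, List.length_range',
      flushStack_succ, List.length_drop, abscissaAt_succ, abscissaAt_succ ν (y + 1)]
    omega

theorem eastRow_lt_length_flushAvail (hμ : IsNuPath ν μ) (y : ℕ) :
    eastRow μ y < (flushAvail (newCols ν) (eastRow μ) y).length := by
  have hlen := length_flushAvail_newCols hμ y
  have hcap := abscissaAt_le_of_isNuPath hμ (y + 1)
  rw [abscissaAt_succ μ] at hcap
  omega

theorem flushHeight_newCols (hμ : IsNuPath ν μ) (y : ℕ) :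
    flushHeight (newCols ν) (eastRow μ) y = slack ν μ y + 1 := by
  have hlen := length_flushAvail_newCols hμ y
  have hcap := abscissaAt_le_of_isNuPath hμ (y + 1)
  rw [abscissaAt_succ μ] at hcap
  rw [flushHeight_eq, slack, abscissaAt_succ μ]
  omega

theorem mem_rflushAux_iff {a : ℕ → ℕ} (ha : ∀ y, a y < (flushAvail (newCols ν) a y).length)
    (m : ℕ) {y : ℕ} {forb : List ℕ} (hforb : IsForbidden (newCols ν) a y forb) (p : ℕ × ℕ) :
    p ∈ rflushAux ν ((List.range' y m).map (a · + 1)) y forb ↔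
      y ≤ p.2 ∧ p.2 < y + m ∧ p.1 ∈ flushRow (newCols ν) a p.2 := by
  induction m generalizing y forb with
  | zero =>
    simp only [List.range'_zero, List.map_nil, rflushAux, List.not_mem_nil, false_iff]
    omega
  | succ m ih =>
    have hnew := (sortedGT_flushStack_newCols ν (y + 1)).nodup
    have hplaced : ((rowAvail ν y).filter (· ∉ forb)).take (a y + 1) =
        flushRow (newCols ν) a y := by
      rw [rowAvail_eq_flushStack, hforb.filter_flushStack_succ hnew, flushRow]
    have hpopped : (flushRow (newCols ν) a y).dropLast =
        (flushAvail (newCols ν) a y).take (a y) := by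
      obtain ⟨l, S, hl⟩ := exists_flushStack_succ_eq_cons (ha y)
      rw [flushRow_eq_take_append_top hl, List.dropLast_concat]
    rw [List.range'_succ, List.map_cons, rflushAux, hplaced, hpopped, List.mem_append,
      ih (hforb.succ hnew), List.mem_map]
    obtain ⟨x, k⟩ := p
    simp only [Prod.mk.injEq]
    constructor
    · rintro (⟨x, hx, rfl, rfl⟩ | ⟨hyk, hk, hx⟩)
      · exact ⟨le_rfl, by omega, hx⟩
      · exact ⟨by omega, by omega, hx⟩
    · rintro ⟨hyk, hk, hx⟩
      rcases hyk.eq_or_lt with rfl | hlt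
      · exact .inl ⟨x, hx, rfl, rfl⟩
      · exact .inr ⟨hlt, by omega, hx⟩

theorem Rflush_eq_flushPoints (hμ : IsNuPath ν μ) :
    Rflush ν μ = flushPoints (northSteps ν) (newCols ν) (eastRow μ) := by
  have hcounts : (List.range (northSteps ν + 1)).map (pointsAtHeight μ) =
      (List.range' 0 (northSteps ν + 1)).map (eastRow μ · + 1) := by
    rw [List.range_eq_range']
    refine List.map_congr_left fun k hk => pointsAtHeight_eq ?_
    have hn := hμ.2.1
    rw [List.mem_range'_1] at hk
    omega
  ext p
  rw [Rflush, Set.mem_ofPred_eq, hcounts,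
    mem_rflushAux_iff (eastRow_lt_length_flushAvail hμ) _ ⟨List.nil_subset _, rfl⟩]
  simp [flushPoints]

end Rflush

theorem tamariCover_iff_rotation (ν : List Bool) (μ μ' : List Bool)
    (hμ : IsNuPath ν μ) (hμ' : IsNuPath ν μ') :
    TamariCover ν μ μ' ↔ IsRightRotation (Rflush ν μ) (Rflush ν μ') := by
  have eastRow_eq : ∀ k > northSteps ν, eastRow μ' k = eastRow μ k := fun k hk => by
    rw [eastRow_eq_zero (hμ'.2.1.trans_lt hk), eastRow_eq_zero (hμ.2.1.trans_lt hk)]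
  have height_eq : flushHeight (newCols ν) (eastRow μ) = fun y => slack ν μ y + 1 :=
    funext (flushHeight_newCols hμ)
  rw [Rflush_eq_flushPoints hμ, Rflush_eq_flushPoints hμ',
    isRightRotation_flushPoints_iff (sortedGT_flushStack_newCols ν)
      (eastRow_lt_length_flushAvail hμ) (eastRow_lt_length_flushAvail hμ') eastRow_eq,
    tamariCover_iff hμ hμ', height_eq]
  simp only [isFirstReturn_add_const_iff]
end
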